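/- arXiv:2309.09188 — 8 statements merged into one kernel-verified Lean document; each statement's English description precedes it below -/
import Mathlib

section
/- Let I be a monomial ideal of the polynomial ring S = K[x_1,...,x_n] over a field K. Then for every associated prime p of I, the local v-number satisfies v_p(I) ≥ α(I) − 1, where α(I) is the initial degree of I. -/
open MvPolynomial

noncomputable section

variable (K : Type*) [Field K]

/-- The set of associated primes of `S/I`. -/
def assPrimes {σ : Type*} (I : Ideal (MvPolynomial σ K)) : Set (Ideal (MvPolynomial σ K)) :=
  associatedPrimes (MvPolynomial σ K) (MvPolynomial σ K ⧸ I)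

/-- The v-number of `I` at a prime `p`:
`min {d : ∃ homogeneous f of degree d with (I : f) = p}`. -/
def vNumberAt {σ : Type*} (I p : Ideal (MvPolynomial σ K)) : ℕ :=
  sInf {d | ∃ f : MvPolynomial σ K, f.IsHomogeneous d ∧ I.colon (Ideal.span {f}) = p}

/-- The v-number of `I`:
`min {d : ∃ homogeneous f of degree d with (I : f) ∈ Ass(I)}`. -/
def vNumber {σ : Type*} (I : Ideal (MvPolynomial σ K)) : ℕ :=
  sInf {d | ∃ f : MvPolynomial σ K, f.IsHomogeneous d ∧
    I.colon (Ideal.span {f}) ∈ assPrimes K I}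

/-- The initial degree `α(I) = min {d : I_d ≠ 0}`. -/
def initialDegree {σ : Type*} (I : Ideal (MvPolynomial σ K)) : ℕ :=
  sInf {d | ∃ f ∈ I, f ≠ 0 ∧ f.IsHomogeneous d}

/-- A monomial ideal: an ideal generated by monomials. -/
def IsMonomialIdeal {σ : Type*} (I : Ideal (MvPolynomial σ K)) : Prop :=
  ∃ A : Set (σ →₀ ℕ), I = Ideal.span ((fun m => (monomial m (1 : K) : MvPolynomial σ K)) '' A)

theorem aux_support_lt {σ : Type*} (g : MvPolynomial σ K) (b : σ →₀ ℕ) (hb : b ∈ g.support) :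
    (g - monomial b (coeff b g)).support.card < g.support.card := by
  classical
  apply Finset.card_lt_card
  rw [Finset.ssubset_iff_of_subset]
  · refine ⟨b, hb, ?_⟩
    simp
  · intro m hm
    by_cases h : b = m
    · rw [← h]; exact hb
    · simpa [h] using hm

theorem aux_terms {σ : Type*} (mo : MonomialOrder σ) (p : Ideal (MvPolynomial σ K))
    (H : ∀ h ∈ p, h ≠ 0 → monomial (mo.degree h) (1 : K) ∈ p) :
    ∀ (N : ℕ) (h : MvPolynomial σ K), h.support.card = N → h ∈ p →
      ∀ a ∈ h.support, monomial a (1 : K) ∈ p := by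
  intro N
  induction N using Nat.strong_induction_on with
  | _ N ih =>
    intro h hN hp a ha
    have h0 : h ≠ 0 := by rintro rfl; simp at ha
    have hlead := H h hp h0
    by_cases hab : mo.degree h = a
    · rwa [hab] at hlead
    · have hlt := aux_support_lt K h (mo.degree h) (mo.degree_mem_support h0)
      refine ih _ (hN ▸ hlt) _ rfl (p.sub_mem hp ?_) a ?_
      · have := p.mul_mem_left (C (coeff (mo.degree h) h)) hlead
        rwa [C_mul_monomial, mul_one] at this
      · classical
        simpa [hab] using ha

theorem aux_main {σ : Type*} (mo : MonomialOrder σ) (I p : Ideal (MvPolynomial σ K))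
    (hmon : ∀ f, f ∈ I ↔ ∀ m ∈ f.support, monomial m (1 : K) ∈ I) (hp : p.IsPrime) :
    ∀ (N : ℕ) (g : MvPolynomial σ K), g.support.card = N → (∀ r, r ∈ p ↔ r * g ∈ I) →
      (∀ h ∈ p, ∀ a ∈ h.support, monomial a (1 : K) ∈ p) ∧
      ∃ m, ∀ r, r ∈ p ↔ r * monomial m (1 : K) ∈ I := by
  intro N
  induction N using Nat.strong_induction_on with
  | _ N ih =>
    intro g hN hg
    have h1 : (1 : MvPolynomial σ K) ∉ p := fun h => hp.ne_top ((Ideal.eq_top_iff_one _).2 h)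
    have hg0 : g ≠ 0 := by
      rintro rfl
      exact h1 ((hg 1).2 (by simp))
    by_cases H : ∀ h ∈ p, h ≠ 0 → monomial (mo.degree h) (1 : K) ∈ p
    · have ht : ∀ h ∈ p, ∀ a ∈ h.support, monomial a (1 : K) ∈ p :=
        fun h hh => aux_terms K mo p H _ h rfl hh
      refine ⟨ht, ?_⟩
      have hle : ∀ m ∈ g.support, ∀ r ∈ p, r * monomial m (1 : K) ∈ I := by
        intro m hm r hr
        have hs : ∀ a ∈ r.support, monomial a (1 : K) * monomial m 1 ∈ I := by
          intro a ha
          have h2 := (hmon _).1 ((hg _).1 (ht r hr a ha)) (a + m) (by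
            rw [mem_support_iff, coeff_monomial_mul, one_mul]
            exact mem_support_iff.1 hm)
          simpa [monomial_mul] using h2
        rw [r.as_sum, Finset.sum_mul]
        refine I.sum_mem fun a ha => ?_
        have h3 := I.mul_mem_left (C (coeff a r)) (hs a ha)
        rwa [← mul_assoc, C_mul_monomial, mul_one] at h3
      have hinf : g.support.inf (fun m => I.colon ({monomial m (1 : K)} : Set (MvPolynomial σ K))) ≤ p := by
        intro r hr
        rw [hg]
        rw [Submodule.mem_finsetInf] at hr
        rw [g.as_sum, Finset.mul_sum]
        refine I.sum_mem fun a ha => ?_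
        have h2 := Submodule.mem_colon_singleton.1 (hr a ha)
        rw [smul_eq_mul] at h2
        have h3 := I.mul_mem_left (C (coeff a g)) h2
        rwa [mul_left_comm, C_mul_monomial, mul_one] at h3
      obtain ⟨m, hm, hmp⟩ := (hp.inf_le').1 hinf
      refine ⟨m, fun r => ⟨hle m hm r, fun h => hmp ?_⟩⟩
      exact Submodule.mem_colon_singleton.2 h
    · push Not at H
      obtain ⟨h, hh, h0, hn⟩ := H
      set a := mo.degree h with ha
      set b := mo.degree g with hb
      have hab : monomial (a + b) (1 : K) ∈ I := by
        refine (hmon _).1 ((hg _).1 hh) _ ?_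
        rw [← mo.degree_mul h0 hg0]
        exact mo.degree_mem_support (mul_ne_zero h0 hg0)
      have hlt := aux_support_lt K g b (mo.degree_mem_support hg0)
      refine ih _ ?_ (monomial a (1 : K) * (g - monomial b (coeff b g))) rfl ?_
      · rw [← hN]
        refine lt_of_le_of_lt ?_ hlt
        classical
        refine (Finset.card_le_card (support_mul _ _)).trans ?_
        refine Finset.card_add_le.trans ?_
        rw [support_monomial, if_neg one_ne_zero, Finset.card_singleton, one_mul]
      · intro r
        have e : r * (monomial a (1 : K) * (g - monomial b (coeff b g))) =
            (r * monomial a 1) * g - (r * C (coeff b g)) * monomial (a + b) 1 := by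
          have : monomial (a + b) (1 : K) = monomial a 1 * monomial b 1 := by simp [monomial_mul]
          rw [this]
          have : monomial b (coeff b g) = C (coeff b g) * monomial b 1 := by simp [C_mul_monomial]
          rw [this]; ring
        rw [e, I.sub_mem_iff_left (I.mul_mem_left _ hab), ← hg]
        exact ⟨fun h => p.mul_mem_right _ h, fun h => (hp.mem_or_mem h).resolve_right hn⟩

theorem aux_var {σ : Type*} (p : Ideal (MvPolynomial σ K)) (hp : p.IsPrime) (a : σ →₀ ℕ)
    (ha : monomial a (1 : K) ∈ p) : ∃ i, (X i : MvPolynomial σ K) ∈ p := by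
  rw [monomial_eq, map_one, one_mul, Finsupp.prod, hp.prod_mem_iff] at ha
  obtain ⟨i, -, hi⟩ := ha
  exact ⟨i, hp.mem_of_pow_mem _ hi⟩

/-- For a monomial ideal `I` and every associated prime `p` of `I`,
`v_p(I) ≥ α(I) - 1`. -/
theorem stmt0 {n : ℕ} (I p : Ideal (MvPolynomial (Fin n) K))
    (hI : IsMonomialIdeal K I) (hp : p ∈ assPrimes K I) :
    initialDegree K I - 1 ≤ vNumberAt K I p := by
  obtain ⟨hprime, x, hx⟩ := isAssociatedPrime_iff.1 hp
  obtain ⟨g, rfl⟩ := Ideal.Quotient.mk_surjective x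
  have hg : ∀ r, r ∈ p ↔ r * g ∈ I := by
    intro r
    rw [hx, Submodule.mem_colon_singleton, Submodule.mem_bot,
      ← Ideal.Quotient.eq_zero_iff_mem]
    exact Iff.rfl
  have hmon : ∀ f, f ∈ I ↔ ∀ m ∈ f.support, monomial m (1 : K) ∈ I := by
    classical
    obtain ⟨A, rfl⟩ := hI
    intro f
    rw [mem_ideal_span_monomial_image]
    refine forall₂_congr fun m _ => ?_
    rw [mem_ideal_span_monomial_image, support_monomial, if_neg one_ne_zero]
    simp
  obtain ⟨ht, m, hm⟩ := aux_main K MonomialOrder.lex I p hmon hprime _ g rfl hg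
  refine le_csInf ⟨m.degree, monomial m 1, isHomogeneous_monomial _ rfl, ?_⟩ ?_
  · ext r
    rw [Ideal.mem_colon_span_singleton, hm]
  · rintro d ⟨f, hf, hfp⟩
    by_cases hp0 : p = ⊥
    · have hI0 : I = ⊥ := by
        rw [eq_bot_iff, ← hp0, ← hfp]
        exact Ideal.le_colon
      have : initialDegree K I = 0 := by
        unfold initialDegree
        convert Nat.sInf_empty
        ext d
        simp only [hI0, Ideal.mem_bot, Set.mem_ofPred_eq, Set.mem_empty_iff_false, iff_false]
        rintro ⟨f, h, h', -⟩
        exact h' h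
      omega
    · obtain ⟨h, hh, h0⟩ := Submodule.exists_mem_ne_zero_of_ne_bot hp0
      obtain ⟨i, hi⟩ := aux_var K p hprime _
        (ht h hh _ (MonomialOrder.lex.degree_mem_support h0))
      have hf0 : f ≠ 0 := by
        rintro rfl
        apply hprime.ne_top
        rw [← hfp, Ideal.eq_top_iff_one, Ideal.mem_colon_span_singleton]
        simp
      rw [← hfp, Ideal.mem_colon_span_singleton] at hi
      have : initialDegree K I ≤ 1 + d :=
        Nat.sInf_le ⟨X i * f, hi, mul_ne_zero (X_ne_zero i) hf0, (isHomogeneous_X K i).mul hf⟩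
      omega

end
end

section
/- Let I be a monomial ideal of the polynomial ring S = K[x_1,...,x_n] over a field K. Then v(I^k) ≥ α(I)·k − 1 for all integers k ≥ 1, where α(I) is the initial degree of I. -/
open MvPolynomial

noncomputable section

variable (K : Type*) [Field K]

theorem aux_pow {σ : Type*} {I : Ideal (MvPolynomial σ K)} (hI : IsMonomialIdeal K I) (k : ℕ) :
    IsMonomialIdeal K (I ^ k) := by
  induction k with
  | zero =>
    refine ⟨{0}, ?_⟩
    rw [pow_zero, Set.image_singleton, eq_comm, Ideal.one_eq_top, Ideal.eq_top_iff_one]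
    exact Ideal.subset_span rfl
  | succ k ih =>
    obtain ⟨A, hA⟩ := hI
    obtain ⟨B, hB⟩ := ih
    refine ⟨Set.image2 (fun b a => b + a) B A, ?_⟩
    rw [pow_succ, hB]
    conv_lhs => rw [hA]
    rw [Ideal.span_mul_span']
    congr 1
    ext x
    simp only [Set.mem_mul, Set.mem_image, Set.mem_image2]
    constructor
    · rintro ⟨_, ⟨b, hb, rfl⟩, _, ⟨a, ha, rfl⟩, rfl⟩
      exact ⟨b + a, ⟨b, hb, a, ha, rfl⟩, by simp [monomial_mul]⟩
    · rintro ⟨_, ⟨b, hb, a, ha, rfl⟩, rfl⟩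
      exact ⟨_, ⟨b, hb, rfl⟩, _, ⟨a, ha, rfl⟩, by simp [monomial_mul]⟩

theorem aux_mem {σ : Type*} {I : Ideal (MvPolynomial σ K)} (hI : IsMonomialIdeal K I)
    (f : MvPolynomial σ K) :
    f ∈ I ↔ ∀ m ∈ f.support, (monomial m (1 : K) : MvPolynomial σ K) ∈ I := by
  classical
  obtain ⟨A, rfl⟩ := hI
  rw [mem_ideal_span_monomial_image]
  refine forall₂_congr fun m _ => ?_
  rw [mem_ideal_span_monomial_image, support_monomial, if_neg one_ne_zero]
  simp

theorem aux_prime_vars {σ : Type*} (s : Set σ) :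
    (Ideal.span ((X : σ → MvPolynomial σ K) '' s)).IsPrime := by
  classical
  let φ : MvPolynomial σ K →ₐ[K] MvPolynomial σ K := aeval (fun i => if i ∈ s then 0 else X i)
  have h : Ideal.span ((X : σ → MvPolynomial σ K) '' s) = RingHom.ker φ := by
    apply le_antisymm
    · rw [Ideal.span_le]
      rintro _ ⟨i, hi, rfl⟩
      simp [φ, hi]
    · intro f hf
      have key : (Ideal.Quotient.mkₐ K (Ideal.span ((X : σ → MvPolynomial σ K) '' s))).comp φ
          = Ideal.Quotient.mkₐ K (Ideal.span ((X : σ → MvPolynomial σ K) '' s)) := by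
        apply MvPolynomial.algHom_ext
        intro i
        by_cases hi : i ∈ s
        · have : (X i : MvPolynomial σ K) ∈ Ideal.span ((X : σ → MvPolynomial σ K) '' s) :=
            Ideal.subset_span ⟨i, hi, rfl⟩
          simpa [φ, hi] using (Ideal.Quotient.eq_zero_iff_mem.mpr this).symm
        · simp [φ, hi]
      have h2 := DFunLike.congr_fun key f
      have hf' : φ f = 0 := hf
      simp only [AlgHom.comp_apply, hf', map_zero] at h2
      exact Ideal.Quotient.eq_zero_iff_mem.mp h2.symm
  rw [h]
  exact RingHom.ker_isPrime _

theorem aux_prime {σ : Type*} (P : Ideal (MvPolynomial σ K)) (hne : P ≠ ⊤)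
    (hM : ∀ f ∈ P, ∀ m ∈ f.support, (monomial m (1 : K) : MvPolynomial σ K) ∈ P)
    (hp : ∀ a b : σ →₀ ℕ, (monomial (a + b) (1 : K) : MvPolynomial σ K) ∈ P →
      (monomial a (1 : K) : MvPolynomial σ K) ∈ P ∨ (monomial b (1 : K) : MvPolynomial σ K) ∈ P) :
    P.IsPrime := by
  have h : P = Ideal.span ((X : σ → MvPolynomial σ K) '' {i | (X i : MvPolynomial σ K) ∈ P}) := by
    apply le_antisymm
    · intro f hf
      rw [mem_ideal_span_X_image]
      intro m hm
      have := hM f hf m hm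
      clear hm hf
      induction m using Finsupp.induction_linear with
      | zero => exact absurd ((Ideal.eq_top_iff_one P).mpr this) hne
      | add a b iha ihb =>
        rcases hp a b this with h | h
        · obtain ⟨i, hi, h0⟩ := iha h
          exact ⟨i, hi, by simp; omega⟩
        · obtain ⟨i, hi, h0⟩ := ihb h
          exact ⟨i, hi, by simp; omega⟩
      | single i e =>
        induction e with
        | zero =>
          rw [Finsupp.single_zero] at this
          exact absurd ((Ideal.eq_top_iff_one P).mpr this) hne
        | succ e ih =>
          rw [Finsupp.single_add] at this
          rcases hp _ _ this with h | h
          · obtain ⟨j, hj, h0⟩ := ih h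
            refine ⟨j, hj, ?_⟩
            rw [Finsupp.single_add, Finsupp.add_apply]
            omega
          · exact ⟨i, h, by simp⟩
    · rw [Ideal.span_le]
      rintro _ ⟨i, hi, rfl⟩
      exact hi
  rw [h]
  exact aux_prime_vars K _

theorem aux_exists {n : ℕ} {J : Ideal (MvPolynomial (Fin n) K)} (hJ : IsMonomialIdeal K J)
    (hne : J ≠ ⊤) : ∃ u : Fin n →₀ ℕ,
      (J.colon (Ideal.span {(monomial u (1 : K) : MvPolynomial (Fin n) K)})).IsPrime := by
  classical
  let T : Set (Ideal (MvPolynomial (Fin n) K)) :=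
    {P | P ≠ ⊤ ∧ ∃ u : Fin n →₀ ℕ, P = J.colon (Ideal.span {(monomial u (1 : K))})}
  have hT : T.Nonempty := by
    refine ⟨J, hne, 0, ?_⟩
    ext f
    rw [Ideal.mem_colon_span_singleton]
    change _ ↔ f * 1 ∈ J
    rw [mul_one]
  obtain ⟨P, ⟨hPne, u, hu⟩, hmax⟩ :=
    set_has_maximal_iff_noetherian.mpr (inferInstance : IsNoetherianRing (MvPolynomial (Fin n) K)) T hT
  have hmem : ∀ f, f ∈ P ↔ f * monomial u 1 ∈ J := by
    intro f; rw [hu, Ideal.mem_colon_span_singleton]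
  refine ⟨u, hu ▸ aux_prime K P hPne ?_ ?_⟩
  · intro f hf m hm
    rw [hmem] at hf ⊢
    rw [monomial_mul, one_mul]
    refine (aux_mem K hJ _).mp hf _ ?_
    rw [mem_support_iff, coeff_mul_monomial, mul_one]
    exact mem_support_iff.mp hm
  · intro a b hab
    by_contra! hcon
    obtain ⟨ha, hb⟩ := hcon
    have hle : P ≤ J.colon (Ideal.span {(monomial (u + b) (1 : K))}) := by
      intro f hf
      rw [Ideal.mem_colon_span_singleton]
      rw [hmem] at hf
      have := J.mul_mem_right (monomial b (1 : K)) hf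
      rwa [mul_assoc, monomial_mul, one_mul] at this
    refine hmax (J.colon (Ideal.span {(monomial (u + b) (1 : K))})) ⟨?_, u + b, rfl⟩
      (lt_of_le_of_ne hle ?_)
    · intro htop
      rw [Ideal.eq_top_iff_one, Ideal.mem_colon_span_singleton, one_mul] at htop
      apply hb
      rwa [hmem, monomial_mul, one_mul, add_comm]
    · intro heq
      apply ha
      rw [heq, Ideal.mem_colon_span_singleton, monomial_mul, one_mul]
      rw [hmem, monomial_mul, one_mul] at hab
      rwa [add_comm u b, ← add_assoc]

theorem aux_ass {σ : Type*} (J : Ideal (MvPolynomial σ K)) (f : MvPolynomial σ K)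
    (h : (J.colon (Ideal.span {f})).IsPrime) : J.colon (Ideal.span {f}) ∈ assPrimes K J := by
  refine ⟨h, Ideal.Quotient.mk J f, ?_⟩
  have : (⊥ : Submodule (MvPolynomial σ K) (MvPolynomial σ K ⧸ J)).colon {Ideal.Quotient.mk J f}
      = J.colon (Ideal.span {f}) := by
    ext g
    rw [Ideal.mem_colon_span_singleton, Submodule.mem_colon_singleton, Submodule.mem_bot,
      ← Ideal.Quotient.eq_zero_iff_mem, map_mul]
    rfl
  rw [this, h.radical]

theorem aux_deg {σ : Type*} {I : Ideal (MvPolynomial σ K)} (hI : IsMonomialIdeal K I) :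
    I ≤ idealOfVars σ K ^ initialDegree K I := by
  intro f hf
  rw [mem_pow_idealOfVars_iff]
  intro m hm
  refine Nat.sInf_le ⟨monomial m 1, (aux_mem K hI f).mp hf m hm, ?_, ?_⟩
  · simp
  · exact isHomogeneous_monomial _ rfl

/-- For a monomial ideal `I`, `v(I^k) ≥ α(I)·k - 1` for all `k ≥ 1`. -/
theorem stmt1 {n : ℕ} (I : Ideal (MvPolynomial (Fin n) K)) (hI : IsMonomialIdeal K I) :
    ∀ k : ℕ, 1 ≤ k → initialDegree K I * k - 1 ≤ vNumber K (I ^ k) := by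
  intro k hk
  by_cases h0 : initialDegree K I = 0
  · simp [h0]
  have hIne : I ≠ ⊤ := by
    rintro rfl
    exact h0 (Nat.le_zero.mp (Nat.sInf_le ⟨1, trivial, one_ne_zero, isHomogeneous_one _ _⟩))
  have hIbot : I ≠ ⊥ := by
    rintro rfl
    apply h0
    unfold initialDegree
    convert Nat.sInf_empty
    ext d
    simp +contextual
  have hJ := aux_pow K hI k
  have hJne : I ^ k ≠ ⊤ := fun h => hIne (top_le_iff.mp (h ▸ Ideal.pow_le_self (by omega)))
  have hle : I ^ k ≤ idealOfVars (Fin n) K ^ (initialDegree K I * k) := by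
    rw [pow_mul]
    exact Ideal.pow_right_mono (aux_deg K hI) k
  obtain ⟨u, hu⟩ := aux_exists K hJ hJne
  refine le_csInf ⟨u.degree, monomial u 1, isHomogeneous_monomial _ rfl, aux_ass K _ _ hu⟩ ?_
  rintro d ⟨f, hf, hP⟩
  have hprime : ((I ^ k).colon (Ideal.span {f})).IsPrime := hP.1
  have hf0 : f ≠ 0 := by
    rintro rfl
    apply hprime.ne_top
    rw [Ideal.eq_top_iff_one, Ideal.mem_colon_span_singleton]
    simp
  -- a variable lies in the prime ideal
  obtain ⟨i, hi⟩ : ∃ i, (X i : MvPolynomial (Fin n) K) ∈ (I ^ k).colon (Ideal.span {f}) := by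
    obtain ⟨g, hg, hg0⟩ := Submodule.exists_mem_ne_zero_of_ne_bot hIbot
    obtain ⟨m, hm⟩ := support_nonempty.mpr hg0
    have hmI := (aux_mem K hI g).mp hg m hm
    have hmP : (monomial m (1 : K)) ∈ (I ^ k).colon (Ideal.span {f}) := by
      apply hprime.mem_of_pow_mem k
      rw [Ideal.mem_colon_span_singleton]
      exact Ideal.mul_mem_right _ _ (Ideal.pow_mem_pow hmI k)
    rw [monomial_eq, C_1, one_mul, Finsupp.prod, hprime.prod_mem_iff] at hmP
    obtain ⟨i, _, hi⟩ := hmP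
    exact ⟨i, hprime.mem_of_pow_mem _ hi⟩
  rw [Ideal.mem_colon_span_singleton] at hi
  have hne : X i * f ≠ 0 := mul_ne_zero (X_ne_zero i) hf0
  obtain ⟨m, hm⟩ := support_nonempty.mpr hne
  have h1 := (mem_pow_idealOfVars_iff _ _).mp (hle hi) m hm
  have h2 : m.degree = 1 + d := by
    have := ((isHomogeneous_X K i).mul hf) (mem_support_iff.mp hm)
    rwa [Finsupp.degree_eq_weight_one]
  omega

end
end

section
/- Let I be a graded ideal of S = K[x_1,...,x_n] generated in a single degree. Then: (a) for every stable prime p of I (i.e., p ∈ Ass(I^k) for all k ≫ 0) there exists an integer b_p such that v_p(I^k) = α(I)·k + b_p for all k ≫ 0; and (b) v(I^k) = α(I)·k + b for all k ≫ 0, where b is the minimum of the b_p over all stable primes p of I. -/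
open MvPolynomial

noncomputable section

variable (K : Type*) [Field K]

/-- The stable primes of `I`: primes belonging to `Ass(I^k)` for all `k ≫ 0`. -/
def stablePrimes {σ : Type*} (I : Ideal (MvPolynomial σ K)) : Set (Ideal (MvPolynomial σ K)) :=
  {p | ∃ N : ℕ, ∀ k : ℕ, N ≤ k → p ∈ assPrimes K (I ^ k)}

/-- `I` is generated in a single degree. -/
def Equigenerated {σ : Type*} (I : Ideal (MvPolynomial σ K)) : Prop :=
  ∃ (d : ℕ) (A : Set (MvPolynomial σ K)), (∀ f ∈ A, f.IsHomogeneous d) ∧ I = Ideal.span A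

section AuxRing

/-- `(J : f) = p`, elementwise. -/
def AnnEq {R : Type*} [CommRing R] (J p : Ideal R) (f : R) : Prop := ∀ r, r * f ∈ J ↔ r ∈ p

/-- The contraction of `J R_p` to `R`. -/
def locKer {R : Type*} [CommRing R] (J p : Ideal R) (hp : p.IsPrime) : Ideal R where
  carrier := {f | ∃ s, s ∉ p ∧ s * f ∈ J}
  zero_mem' := ⟨1, fun h => hp.ne_top ((Ideal.eq_top_iff_one p).2 h), by simp⟩
  add_mem' := by
    rintro a b ⟨s, hs, hsa⟩ ⟨t, ht, htb⟩
    refine ⟨s * t, fun h => (hp.mem_or_mem h).elim hs ht, ?_⟩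
    have : s * t * (a + b) = t * (s * a) + s * (t * b) := by ring
    rw [this]
    exact J.add_mem (J.mul_mem_left _ hsa) (J.mul_mem_left _ htb)
  smul_mem' := by
    rintro c a ⟨s, hs, hsa⟩
    refine ⟨s, hs, ?_⟩
    have : s * (c • a) = c * (s * a) := by simp only [smul_eq_mul]; ring
    rw [this]
    exact J.mul_mem_left _ hsa

/-- `(J : p)`. -/
def colonId {R : Type*} [CommRing R] (J p : Ideal R) : Ideal R := J.colon (p : Set R)

theorem mem_colonId {R : Type*} [CommRing R] {J p : Ideal R} {f : R} :
    f ∈ colonId J p ↔ ∀ q ∈ p, f * q ∈ J := by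
  simp [colonId, Submodule.mem_colon]

theorem mem_locKer {R : Type*} [CommRing R] {J p : Ideal R} {hp : p.IsPrime} {f : R} :
    f ∈ locKer J p hp ↔ ∃ s, s ∉ p ∧ s * f ∈ J := Iff.rfl

theorem annEq_iff {R : Type*} [CommRing R] {J p : Ideal R} (hp : p.IsPrime) {f : R} :
    AnnEq J p f ↔ f ∈ colonId J p ∧ f ∉ locKer J p hp := by
  rw [mem_colonId, mem_locKer]
  constructor
  · intro h
    refine ⟨fun q hq => by rw [mul_comm]; exact (h q).2 hq, ?_⟩
    rintro ⟨s, hs, hsf⟩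
    exact hs ((h s).1 hsf)
  · rintro ⟨h1, h2⟩ r
    constructor
    · intro h
      by_contra hr
      exact h2 ⟨r, hr, h⟩
    · intro h
      rw [mul_comm]; exact h1 r h

theorem colon_span_eq_iff {R : Type*} [CommRing R] {J p : Ideal R} {f : R} :
    J.colon (Ideal.span {f} : Set R) = p ↔ AnnEq J p f := by
  have key : ∀ r, r ∈ J.colon (Ideal.span {f} : Set R) ↔ r * f ∈ J := by
    intro r
    rw [Submodule.mem_colon]
    constructor
    · intro h
      exact h f (Ideal.subset_span rfl)
    · intro h s hs
      obtain ⟨c, rfl⟩ := Ideal.mem_span_singleton'.1 hs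
      have : r • (c * f) = c * (r * f) := by simp only [smul_eq_mul]; ring
      rw [this]
      exact J.mul_mem_left _ h
  constructor
  · rintro rfl r
    exact (key r).symm
  · intro h
    ext r
    rw [key, h r]

theorem mem_ass_iff {R : Type*} [CommRing R] [IsNoetherianRing R] {J p : Ideal R} :
    p ∈ associatedPrimes R (R ⧸ J) ↔ p.IsPrime ∧ ∃ f, AnnEq J p f := by
  rw [AssociatedPrimes.mem_iff, isAssociatedPrime_iff]
  refine and_congr_right fun _ => ?_
  have key : ∀ f : R, p = Submodule.colon (⊥ : Submodule R (R ⧸ J)) {Ideal.Quotient.mk J f} ↔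
      AnnEq J p f := by
    intro f
    have : ∀ r, r ∈ Submodule.colon (⊥ : Submodule R (R ⧸ J)) {Ideal.Quotient.mk J f} ↔
        r * f ∈ J := by
      intro r
      rw [Submodule.mem_colon_singleton, Submodule.mem_bot, Algebra.smul_def,
        Ideal.Quotient.algebraMap_eq, ← map_mul, Ideal.Quotient.eq_zero_iff_mem]
    constructor
    · intro h r
      rw [h, this]
    · intro h
      ext r
      rw [this, h r]
  constructor
  · rintro ⟨x, hx⟩
    obtain ⟨f, rfl⟩ := Ideal.Quotient.mk_surjective x
    exact ⟨f, (key f).1 hx⟩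
  · rintro ⟨f, hf⟩
    exact ⟨_, (key f).2 hf⟩

theorem mul_locKer {R : Type*} [CommRing R] {I p : Ideal R} {hp : p.IsPrime} {k : ℕ} {a f : R}
    (ha : a ∈ I) (hf : f ∈ locKer (I ^ k) p hp) : a * f ∈ locKer (I ^ (k + 1)) p hp := by
  obtain ⟨s, hs, hsf⟩ := hf
  refine ⟨s, hs, ?_⟩
  have : s * (a * f) = s * f * a := by ring
  rw [this, pow_succ]
  exact Ideal.mul_mem_mul hsf ha

theorem mul_colonId {R : Type*} [CommRing R] {I p : Ideal R} {k : ℕ} {a f : R}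
    (ha : a ∈ I) (hf : f ∈ colonId (I ^ k) p) : a * f ∈ colonId (I ^ (k + 1)) p := by
  rw [mem_colonId] at hf ⊢
  intro q hq
  have : a * f * q = f * q * a := by ring
  rw [this, pow_succ]
  exact Ideal.mul_mem_mul (hf q hq) ha

theorem colonId_succ_le {R : Type*} [CommRing R] (I p : Ideal R) (k : ℕ) :
    colonId (I ^ (k + 1)) p ≤ colonId (I ^ k) p := by
  intro f hf
  rw [mem_colonId] at hf ⊢
  exact fun q hq => Ideal.pow_le_pow_right (Nat.le_succ k) (hf q hq)

/-- Artin-Rees type statement: `(I^{k+1} : p) = I (I^k : p)` for large `k`. -/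
theorem colon_stable {R : Type*} [CommRing R] [IsDomain R] [IsNoetherianRing R] (I p : Ideal R)
    (hp : p ≠ ⊥) : ∃ k0, ∀ k, k0 ≤ k → colonId (I ^ (k + 1)) p ≤ I * colonId (I ^ k) p := by
  obtain ⟨a, ha, ha0⟩ := Submodule.exists_mem_ne_zero_of_ne_bot hp
  let F : I.Filtration R :=
    { N := fun k => Ideal.span {a} * colonId (I ^ k) p
      mono := fun k => Ideal.mul_mono_right (colonId_succ_le I p k)
      smul_le := fun k => by
        rw [smul_eq_mul, mul_left_comm]
        refine Ideal.mul_mono_right ?_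
        rw [Ideal.mul_le]
        intro r hr s hs
        exact mul_colonId hr hs }
  have hF : F.Stable := by
    refine (I.stableFiltration_stable (⊤ : Submodule R R)).of_le ?_
    intro k
    change Ideal.span {a} * colonId (I ^ k) p ≤ I ^ k • (⊤ : Ideal R)
    rw [smul_eq_mul, Ideal.mul_top, Ideal.mul_le]
    intro r hr s hs
    obtain ⟨c, rfl⟩ := Ideal.mem_span_singleton'.1 hr
    have : c * a * s = c * (s * a) := by ring
    rw [this]
    exact Ideal.mul_mem_left _ _ (mem_colonId.1 hs a ha)
  obtain ⟨k0, hk⟩ := hF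
  refine ⟨k0, fun k hk0 f hf => ?_⟩
  have h := hk k hk0
  change I • (Ideal.span {a} * colonId (I ^ k) p) =
    Ideal.span {a} * colonId (I ^ (k + 1)) p at h
  have h2 : a * f ∈ Ideal.span {a} * (I * colonId (I ^ k) p) := by
    rw [mul_left_comm, ← smul_eq_mul I, h]
    exact Ideal.mul_mem_mul (Ideal.subset_span rfl) hf
  obtain ⟨z, hz, hzf⟩ := Ideal.mem_span_singleton_mul.1 h2
  have := mul_left_cancel₀ ha0 hzf
  exact this ▸ hz

open Polynomial in
/-- The ideal `⊕ I^{k+1} t^k` of the Rees algebra. -/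
def reesIdeal {R : Type*} [CommRing R] (I : Ideal R) : Ideal (reesAlgebra I) where
  carrier := {F | ∀ i, (F : R[X]).coeff i ∈ I ^ (i + 1)}
  zero_mem' := by intro i; simp
  add_mem' := by
    intro a b ha hb i
    simpa using Ideal.add_mem _ (ha i) (hb i)
  smul_mem' := by
    intro c a ha i
    rw [smul_eq_mul, MulMemClass.coe_mul, Polynomial.coeff_mul]
    apply Ideal.sum_mem
    rintro ⟨j, k⟩ e
    rw [← Finset.HasAntidiagonal.mem_antidiagonal.mp e, add_assoc, pow_add]
    exact Ideal.mul_mem_mul (c.2 j) (ha k)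

/-- Finiteness part of Brodmann's theorem. -/
theorem finite_ass {R : Type*} [CommRing R] [IsNoetherianRing R] (I : Ideal R) :
    ∃ T : Set (Ideal R), T.Finite ∧ ∀ k, associatedPrimes R (R ⧸ I ^ k) ⊆ T := by
  refine ⟨Ideal.comap (algebraMap R (reesAlgebra I)) ''
    associatedPrimes (reesAlgebra I) (reesAlgebra I ⧸ reesIdeal I),
    (associatedPrimes.finite _ _).image _, ?_⟩
  intro k
  induction k with
  | zero =>
    intro p hp
    obtain ⟨hp, f, hf⟩ := mem_ass_iff.1 hp
    exact absurd ((Ideal.eq_top_iff_one p).2 ((hf 1).1 (by simp))) hp.ne_top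
  | succ k ih =>
    intro p hp
    obtain ⟨hpp, f, hf⟩ := mem_ass_iff.1 hp
    by_cases hN : f ∈ locKer (I ^ k) p hpp
    · obtain ⟨s, hs, hsf⟩ := hN
      have hg : AnnEq (I ^ (k + 1)) p (s * f) := by
        intro r
        rw [← mul_assoc, hf]
        exact ⟨fun h => (hpp.mem_or_mem h).resolve_right hs, fun h => p.mul_mem_right _ h⟩
      let G : reesAlgebra I := ⟨Polynomial.monomial k (s * f), reesAlgebra.monomial_mem.2 hsf⟩
      have hcol : ((reesIdeal I).colon {G}).comap (algebraMap R (reesAlgebra I)) = p := by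
        ext r
        rw [Ideal.mem_comap, Submodule.mem_colon_singleton, ← hg r]
        have hc : ∀ i, ((algebraMap R (reesAlgebra I) r • G : reesAlgebra I) :
            Polynomial R).coeff i = if k = i then r * (s * f) else 0 := by
          intro i
          rw [smul_eq_mul, MulMemClass.coe_mul]
          change (Polynomial.C r * Polynomial.monomial k (s * f)).coeff i = _
          rw [Polynomial.coeff_C_mul, Polynomial.coeff_monomial]
          split_ifs <;> simp
        constructor
        · intro h
          have := h k
          rwa [hc, if_pos rfl] at this
        · intro h i
          rw [hc]
          split_ifs with hki
          · exact hki ▸ h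
          · exact Ideal.zero_mem _
      have hmin : p ∈ (((reesIdeal I).colon {G}).comap
          (algebraMap R (reesAlgebra I))).minimalPrimes := by
        rw [hcol, Ideal.minimalPrimes_eq_subsingleton_self]
        rfl
      obtain ⟨P, hP, hPp⟩ := Ideal.exists_minimalPrimes_comap_eq _ p hmin
      refine ⟨P, ?_, hPp⟩
      obtain ⟨x, hx⟩ := Submodule.exists_eq_colon_of_mem_minimalPrimes hP
      refine mem_ass_iff.2 ⟨hP.1.1, x, fun r => ?_⟩
      rw [hx, Submodule.mem_colon_singleton, smul_eq_mul]
    · refine ih (mem_ass_iff.2 ⟨hpp, f, (annEq_iff hpp).2 ⟨?_, hN⟩⟩)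
      exact colonId_succ_le I p k ((annEq_iff hpp).1 hf).1

end AuxRing

section AuxGraded

variable {K} {n : ℕ}

local notation "S" => MvPolynomial (Fin n) K

theorem hc_mul_add {g : S} {e : ℕ} (hg : g.IsHomogeneous e) (m : ℕ) (f : S) :
    homogeneousComponent (e + m) (g * f) = g * homogeneousComponent m f := by
  conv_lhs => rw [← sum_homogeneousComponent f, Finset.mul_sum, map_sum]
  have : ∀ i ∈ Finset.range (f.totalDegree + 1),
      homogeneousComponent (e + m) (g * homogeneousComponent i f) =
        if m = i then g * homogeneousComponent m f else 0 := by
    intro i _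
    rw [homogeneousComponent_of_mem (hg.mul (homogeneousComponent_isHomogeneous i f))]
    by_cases h : m = i
    · subst h; simp
    · rw [if_neg h, if_neg (by omega)]
  rw [Finset.sum_congr rfl this, Finset.sum_ite_eq]
  split_ifs with h
  · rfl
  · rw [homogeneousComponent_eq_zero, mul_zero]
    simpa using h

theorem hc_mul_lt {g : S} {e : ℕ} (hg : g.IsHomogeneous e) {m : ℕ} (hm : m < e) (f : S) :
    homogeneousComponent m (g * f) = 0 := by
  conv_lhs => rw [← sum_homogeneousComponent f, Finset.mul_sum, map_sum]
  refine Finset.sum_eq_zero fun i _ => ?_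
  rw [homogeneousComponent_of_mem (hg.mul (homogeneousComponent_isHomogeneous i f)),
    if_neg (by omega)]

/-- Homogeneous ideals. -/
def HomI (J : Ideal S) : Prop := ∀ f ∈ J, ∀ m, homogeneousComponent m f ∈ J

theorem mem_of_hc {J : Ideal S} {f : S} (h : ∀ m, homogeneousComponent m f ∈ J) : f ∈ J := by
  rw [← sum_homogeneousComponent f]
  exact J.sum_mem fun i _ => h i

theorem homI_pow {d : ℕ} {A : Set S} (hA : ∀ f ∈ A, f.IsHomogeneous d) (k : ℕ) :
    HomI ((Ideal.span A) ^ k) := by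
  have hm : ∀ (J₁ J₂ : Ideal S), HomI J₁ → HomI J₂ → HomI (J₁ * J₂) := by
    intro J₁ J₂ h₁ h₂ f hf
    refine Submodule.mul_induction_on hf ?_ ?_
    · intro x hx y hy m
      rw [← sum_homogeneousComponent x, Finset.sum_mul, map_sum]
      refine Ideal.sum_mem _ fun i _ => ?_
      have hi := homogeneousComponent_isHomogeneous i x
      rcases lt_or_ge m i with h | h
      · rw [hc_mul_lt hi h]; exact Ideal.zero_mem _
      · obtain ⟨j, rfl⟩ := Nat.exists_eq_add_of_le h
        rw [hc_mul_add hi]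
        exact Ideal.mul_mem_mul (h₁ x hx i) (h₂ y hy j)
    · intro x y hx hy m
      rw [map_add]
      exact Ideal.add_mem _ (hx m) (hy m)
  have ht : HomI (⊤ : Ideal S) := fun _ _ _ => Submodule.mem_top
  have hs : HomI (Ideal.span A) := by
    intro f hf
    refine Submodule.span_induction (p := fun f _ => ∀ m, homogeneousComponent m f ∈ Ideal.span A)
      ?_ ?_ ?_ ?_ hf
    · intro x hx m
      rw [homogeneousComponent_of_mem (hA x hx)]
      split_ifs
      · exact Ideal.subset_span hx
      · exact Ideal.zero_mem _
    · intro m; rw [map_zero]; exact Ideal.zero_mem _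
    · intro x y _ _ hx hy m
      rw [map_add]; exact Ideal.add_mem _ (hx m) (hy m)
    · intro a x _ hx m
      rw [smul_eq_mul, ← sum_homogeneousComponent a, Finset.sum_mul, map_sum]
      refine Ideal.sum_mem _ fun i _ => ?_
      have hi := homogeneousComponent_isHomogeneous i a
      rcases lt_or_ge m i with h | h
      · rw [hc_mul_lt hi h]; exact Ideal.zero_mem _
      · obtain ⟨j, rfl⟩ := Nat.exists_eq_add_of_le h
        rw [hc_mul_add hi]
        exact Ideal.mul_mem_left _ _ (hx j)
  induction k with
  | zero => rw [pow_zero, Ideal.one_eq_top]; exact ht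
  | succ k ih => rw [pow_succ]; exact hm _ _ ih hs

theorem homI_colon {J p : Ideal S} (hJ : HomI J) (hp : HomI p) : HomI (colonId J p) := by
  intro f hf m
  rw [mem_colonId] at hf ⊢
  intro q hq
  rw [← sum_homogeneousComponent q, Finset.mul_sum]
  refine J.sum_mem fun i _ => ?_
  have hi := homogeneousComponent_isHomogeneous i q
  rw [mul_comm, ← hc_mul_add hi, mul_comm]
  exact hJ _ (hf _ (hp q hq i)) _

/-- Lowest component of an element of an associated prime of a homogeneous ideal. -/
theorem lowest_mem {J p : Ideal S} (hJ : HomI J) (hp : p.IsPrime) {f : S} (hf : AnnEq J p f)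
    {g : S} (hg : g ∈ p) {e : ℕ} (he : ∀ j < e, homogeneousComponent j g = 0) :
    homogeneousComponent e g ∈ p := by
  set g0 := homogeneousComponent e g with hg0
  have hgf : g * f ∈ J := (hf g).2 hg
  have key : ∀ i, g0 ^ (i + 1) * homogeneousComponent i f ∈ J := by
    intro i
    induction i using Nat.strong_induction_on with
    | _ i ih =>
    have h1 : g0 ^ i * homogeneousComponent (e + i) (g * f) ∈ J := J.mul_mem_left _ (hJ _ hgf _)
    have h2 : homogeneousComponent (e + i) (g * f) =
        ∑ j ∈ Finset.range (g.totalDegree + 1 + (e + 1)),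
          homogeneousComponent (e + i) (homogeneousComponent j g * f) := by
      rw [← map_sum, ← Finset.sum_mul]
      congr 2
      conv_lhs => rw [← sum_homogeneousComponent g]
      refine Finset.sum_subset (by intro x; simp; omega) ?_
      intro x _ hx
      exact homogeneousComponent_eq_zero _ _ (by simpa using hx)
    rw [h2, Finset.sum_eq_sum_sdiff_singleton_add (i := e)
      (by simp only [Finset.mem_range]; omega), mul_add] at h1
    have h3 : g0 ^ i * ∑ j ∈ Finset.range (g.totalDegree + 1 + (e + 1)) \ {e},
        homogeneousComponent (e + i) (homogeneousComponent j g * f) ∈ J := by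
      rw [Finset.mul_sum]
      refine J.sum_mem fun j hj => ?_
      have hje : j ≠ e := by simp at hj; exact hj.2
      have hhj := homogeneousComponent_isHomogeneous j g
      rcases lt_or_gt_of_ne hje with h | h
      · rw [he j h]; simp
      rcases lt_or_ge (e + i) j with h' | h'
      · rw [hc_mul_lt hhj h']; simp
      obtain ⟨l, hl⟩ := Nat.exists_eq_add_of_le h'
      rw [hl, hc_mul_add hhj]
      have hli : l < i := by omega
      have := ih l hli
      have h4 : g0 ^ i * (homogeneousComponent j g * homogeneousComponent l f) =
          (g0 ^ (i - (l + 1)) * homogeneousComponent j g) *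
            (g0 ^ (l + 1) * homogeneousComponent l f) := by
        have : g0 ^ i = g0 ^ (i - (l + 1)) * g0 ^ (l + 1) := by
          rw [← pow_add]; congr 1; omega
        rw [this]; ring
      rw [h4]
      exact J.mul_mem_left _ this
    have h5 := (J.add_mem_iff_right h3).1 h1
    rw [hc_mul_add (homogeneousComponent_isHomogeneous e g)] at h5
    have : g0 ^ (i + 1) * homogeneousComponent i f =
      g0 ^ i * (homogeneousComponent e g * homogeneousComponent i f) := by
      rw [← hg0]; ring
    rw [this]; exact h5
  have hN : g0 ^ (f.totalDegree + 1) * f ∈ J := by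
    have hsum : g0 ^ (f.totalDegree + 1) * f = ∑ i ∈ Finset.range (f.totalDegree + 1),
        g0 ^ (f.totalDegree + 1) * homogeneousComponent i f := by
      rw [← Finset.mul_sum, sum_homogeneousComponent]
    rw [hsum]
    refine J.sum_mem fun i hi => ?_
    have hi' : i < f.totalDegree + 1 := by simpa using hi
    have : g0 ^ (f.totalDegree + 1) = g0 ^ (f.totalDegree - i) * g0 ^ (i + 1) := by
      rw [← pow_add]; congr 1; omega
    rw [this, mul_assoc]
    exact J.mul_mem_left _ (key i)
  exact hp.mem_of_pow_mem _ ((hf _).1 hN)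

theorem homI_ass {J p : Ideal S} (hJ : HomI J) (hp : p.IsPrime) {f : S} (hf : AnnEq J p f) :
    HomI p := by
  intro g hg e
  induction e using Nat.strong_induction_on with
  | _ e ih =>
  have h1 : g - ∑ j ∈ Finset.range e, homogeneousComponent j g ∈ p :=
    p.sub_mem hg (p.sum_mem fun j hj => ih j (by simpa using hj))
  have hc : ∀ m, homogeneousComponent m (g - ∑ j ∈ Finset.range e, homogeneousComponent j g) =
      if m < e then 0 else homogeneousComponent m g := by
    intro m
    rw [map_sub, map_sum]
    have : ∀ j ∈ Finset.range e, homogeneousComponent m (homogeneousComponent j g) =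
        if m = j then homogeneousComponent m g else 0 := by
      intro j _
      rw [homogeneousComponent_of_mem (homogeneousComponent_isHomogeneous j g)]
      by_cases h : m = j
      · subst h; rfl
      · simp [h]
    rw [Finset.sum_congr rfl this, Finset.sum_ite_eq]
    by_cases h : m < e <;> simp [h]
  have := lowest_mem hJ hp hf h1 (e := e) (fun j hj => by rw [hc, if_pos hj])
  rwa [hc, if_neg (lt_irrefl e)] at this

/-- The degrees of homogeneous `f` with `(J : f) = p`. -/
theorem vNumberAt_eq (J p : Ideal S) :
    vNumberAt K J p = sInf {d | ∃ f : S, f.IsHomogeneous d ∧ AnnEq J p f} := by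
  unfold vNumberAt
  simp only [colon_span_eq_iff]

theorem mem_assPrimes_iff {J p : Ideal S} :
    p ∈ assPrimes K J ↔ p.IsPrime ∧ ∃ f, AnnEq J p f := mem_ass_iff

theorem vNumberAt_le {J p : Ideal S} {f : S} {m : ℕ} (hf : f.IsHomogeneous m) (h : AnnEq J p f) :
    vNumberAt K J p ≤ m := by
  rw [vNumberAt_eq]
  exact Nat.sInf_le ⟨f, hf, h⟩

theorem exists_vNumberAt {J p : Ideal S} (hJ : HomI J) (h : p ∈ assPrimes K J) :
    ∃ f : S, f.IsHomogeneous (vNumberAt K J p) ∧ AnnEq J p f := by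
  rw [vNumberAt_eq]
  refine Nat.sInf_mem (s := {d | ∃ f : S, f.IsHomogeneous d ∧ AnnEq J p f}) ?_
  obtain ⟨hp, f, hf⟩ := mem_assPrimes_iff.1 h
  have hph := homI_ass hJ hp hf
  obtain ⟨h1, h2⟩ := (annEq_iff hp).1 hf
  have : ∃ m, homogeneousComponent m f ∉ locKer J p hp := by
    by_contra hcon
    push Not at hcon
    exact h2 (mem_of_hc hcon)
  obtain ⟨m, hm⟩ := this
  exact ⟨m, _, homogeneousComponent_isHomogeneous m f,
    (annEq_iff hp).2 ⟨homI_colon hJ hph f h1 m, hm⟩⟩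

theorem hc_mul_mem {d : ℕ} {A : Set S} (hA : ∀ f ∈ A, f.IsHomogeneous d) {C N N' : Ideal S}
    (hC : HomI C) {e : ℕ} (hN : ∀ a ∈ A, ∀ f ∈ N, a * f ∈ N')
    (h : ∀ c ∈ C, ∀ m, m + d = e → c.IsHomogeneous m → c ∈ N) {f : S}
    (hf : f ∈ Ideal.span A * C) : homogeneousComponent e f ∈ N' := by
  refine Submodule.mul_induction_on hf ?_ ?_
  · intro x hx
    refine Submodule.span_induction
      (p := fun x _ => ∀ y ∈ C, homogeneousComponent e (x * y) ∈ N') ?_ ?_ ?_ ?_ hx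
    · intro a ha y hy
      rcases lt_or_ge e d with h' | h'
      · rw [hc_mul_lt (hA a ha) h']; exact N'.zero_mem
      · obtain ⟨j, rfl⟩ := Nat.exists_eq_add_of_le h'
        rw [hc_mul_add (hA a ha)]
        exact hN a ha _ (h _ (hC y hy j) j (add_comm _ _)
          (homogeneousComponent_isHomogeneous j y))
    · intro y _; simp
    · intro x y _ _ hx hy z hz
      rw [add_mul, map_add]; exact N'.add_mem (hx z hz) (hy z hz)
    · intro r x _ hx y hy
      have : r • x * y = x * (r * y) := by simp only [smul_eq_mul]; ring
      rw [this]
      exact hx _ (C.mul_mem_left _ hy)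
  · intro x y hx hy
    rw [map_add]; exact N'.add_mem hx hy

/-- Descent: from `I^(k+1)` to `I^k`. -/
theorem descent {d : ℕ} {A : Set S} (hA : ∀ f ∈ A, f.IsHomogeneous d) {p : Ideal S} {k : ℕ}
    (hk : colonId ((Ideal.span A) ^ (k + 1)) p ≤ Ideal.span A * colonId ((Ideal.span A) ^ k) p)
    (h : p ∈ assPrimes K ((Ideal.span A) ^ (k + 1))) :
    p ∈ assPrimes K ((Ideal.span A) ^ k) ∧
      vNumberAt K ((Ideal.span A) ^ k) p + d ≤ vNumberAt K ((Ideal.span A) ^ (k + 1)) p := by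
  obtain ⟨f, hfe, hf⟩ := exists_vNumberAt (homI_pow hA _) h
  have hp := (mem_assPrimes_iff.1 h).1
  have hph := homI_ass (homI_pow hA _) hp hf
  obtain ⟨h1, h2⟩ := (annEq_iff hp).1 hf
  have : ∃ c ∈ colonId ((Ideal.span A) ^ k) p, ∃ m,
      m + d = vNumberAt K ((Ideal.span A) ^ (k + 1)) p ∧ c.IsHomogeneous m ∧
      c ∉ locKer ((Ideal.span A) ^ k) p hp := by
    by_contra hcon
    push Not at hcon
    apply h2
    rw [← homogeneousComponent_eq_self hfe]
    exact hc_mul_mem hA (homI_colon (homI_pow hA k) hph)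
      (fun a ha f hf => mul_locKer (Ideal.subset_span ha) hf) hcon (hk h1)
  obtain ⟨c, hc, m, hm, hcm, hcN⟩ := this
  have hc' : AnnEq ((Ideal.span A) ^ k) p c := (annEq_iff hp).2 ⟨hc, hcN⟩
  refine ⟨mem_assPrimes_iff.2 ⟨hp, c, hc'⟩, ?_⟩
  rw [← hm]
  exact Nat.add_le_add_right (vNumberAt_le hcm hc') d

/-- `C` is generated in degrees at most `D`. -/
def GenLe (C : Ideal S) (D : ℕ) : Prop :=
  C ≤ Ideal.span {c | c ∈ C ∧ ∃ m ≤ D, c.IsHomogeneous m}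

theorem exists_genLe {C : Ideal S} (hC : HomI C) : ∃ D, GenLe C D := by
  obtain ⟨s, hs⟩ := IsNoetherian.noetherian C
  refine ⟨s.sup totalDegree, ?_⟩
  unfold GenLe
  conv_lhs => rw [← hs]
  rw [Submodule.span_le]
  intro c hc
  have hcC : c ∈ C := hs ▸ Submodule.subset_span hc
  have hle : c.totalDegree ≤ s.sup totalDegree := Finset.le_sup (f := totalDegree) hc
  rw [SetLike.mem_coe, ← sum_homogeneousComponent c]
  refine Ideal.sum_mem _ fun i hi => Ideal.subset_span ⟨hC c hcC i, i, ?_,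
    homogeneousComponent_isHomogeneous i c⟩
  have : i < c.totalDegree + 1 := by simpa using hi
  omega

theorem genLe_succ {d : ℕ} {A : Set S} (hA : ∀ f ∈ A, f.IsHomogeneous d) {p : Ideal S} {k D : ℕ}
    (hk : colonId ((Ideal.span A) ^ (k + 1)) p ≤ Ideal.span A * colonId ((Ideal.span A) ^ k) p)
    (h : GenLe (colonId ((Ideal.span A) ^ k) p) D) :
    GenLe (colonId ((Ideal.span A) ^ (k + 1)) p) (D + d) := by
  refine hk.trans ((Ideal.mul_mono_right h).trans ?_)
  rw [Ideal.span_mul_span', Ideal.span_le]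
  rintro _ ⟨a, ha, c, ⟨hc, m, hm, hcm⟩, rfl⟩
  refine Ideal.subset_span ⟨mul_colonId (Ideal.subset_span ha) hc, d + m, by omega, ?_⟩
  exact (hA a ha).mul hcm

theorem vNumberAt_le_of_genLe {J p : Ideal S} {D : ℕ} (h : GenLe (colonId J p) D)
    (hp : p ∈ assPrimes K J) : vNumberAt K J p ≤ D := by
  obtain ⟨hpp, f, hf⟩ := mem_assPrimes_iff.1 hp
  obtain ⟨h1, h2⟩ := (annEq_iff hpp).1 hf
  by_contra hcon
  apply h2
  refine (h.trans ?_) h1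
  rw [Ideal.span_le]
  rintro c ⟨hc, m, hm, hcm⟩
  by_contra hcN
  have := vNumberAt_le hcm ((annEq_iff hpp).2 ⟨hc, hcN⟩)
  omega

theorem ne_bot_of_mem_ass {I p : Ideal S} (hI : I ≠ ⊥) {k : ℕ}
    (hp : p ∈ assPrimes K (I ^ k)) : p ≠ ⊥ := by
  rintro rfl
  obtain ⟨_, f, hf⟩ := mem_assPrimes_iff.1 hp
  have : I ^ k ≤ ⊥ := fun r hr => (hf r).1 (Ideal.mul_mem_right _ _ hr)
  exact pow_ne_zero k hI (le_bot_iff.1 this)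

/-- Every prime is eventually in, or eventually out of, `Ass(I^k)`. -/
theorem eventually_ass {d : ℕ} {A : Set S} (hA : ∀ f ∈ A, f.IsHomogeneous d)
    (hI : Ideal.span A ≠ ⊥) (p : Ideal S) :
    ∃ N, ∀ k, N ≤ k → p ∈ assPrimes K ((Ideal.span A) ^ k) → p ∈ stablePrimes K (Ideal.span A) := by
  by_cases hex : ∃ k, p ∈ assPrimes K ((Ideal.span A) ^ k)
  swap
  · push Not at hex
    exact ⟨0, fun k _ h => absurd h (hex k)⟩
  obtain ⟨k1, hk1⟩ := hex
  obtain ⟨k0, hk0⟩ := colon_stable (Ideal.span A) p (ne_bot_of_mem_ass hI hk1)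
  by_cases hst : ∀ k, k0 ≤ k → p ∈ assPrimes K ((Ideal.span A) ^ k)
  · exact ⟨0, fun _ _ _ => ⟨k0, hst⟩⟩
  · push Not at hst
    obtain ⟨k2, hk2, hk2'⟩ := hst
    refine ⟨k2, fun k hk h => absurd h ?_⟩
    induction k, hk using Nat.le_induction with
    | base => exact hk2'
    | succ k hk ih =>
      intro h
      exact ih (descent hA (hk0 k (by omega)) h).1 (descent hA (hk0 k (by omega)) h).1

theorem eventually_linear {d : ℕ} {A : Set S} (hA : ∀ f ∈ A, f.IsHomogeneous d)
    (hI : Ideal.span A ≠ ⊥) (p : Ideal S) (hp : p ∈ stablePrimes K (Ideal.span A)) :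
    ∃ b : ℤ, ∃ N : ℕ, ∀ k : ℕ, N ≤ k →
      (vNumberAt K ((Ideal.span A) ^ k) p : ℤ) = (d : ℤ) * k + b := by
  obtain ⟨N, hN⟩ := hp
  obtain ⟨k0, hk0⟩ := colon_stable (Ideal.span A) p (ne_bot_of_mem_ass hI (hN N le_rfl))
  set k1 := max N k0 with hk1
  have hass : ∀ j, p ∈ assPrimes K ((Ideal.span A) ^ (k1 + j)) := fun j => hN _ (by omega)
  have hp := (mem_assPrimes_iff.1 (hass 0)).1
  obtain ⟨f, hf⟩ := (mem_assPrimes_iff.1 (hass 0)).2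
  have hph : HomI p := homI_ass (homI_pow hA _) hp hf
  obtain ⟨D, hD⟩ := exists_genLe (homI_colon (homI_pow hA k1) hph)
  have hgen : ∀ j, GenLe (colonId ((Ideal.span A) ^ (k1 + j)) p) (D + d * j) := by
    intro j
    induction j with
    | zero => simpa using hD
    | succ j ih =>
      have := genLe_succ hA (hk0 (k1 + j) (by omega)) ih
      rwa [mul_add, mul_one, ← add_assoc, ← add_assoc]
  have hle : ∀ j, vNumberAt K ((Ideal.span A) ^ (k1 + j)) p ≤ D + d * j :=
    fun j => vNumberAt_le_of_genLe (hgen j) (hass j)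
  have hmono : ∀ j, vNumberAt K ((Ideal.span A) ^ (k1 + j)) p + d ≤
      vNumberAt K ((Ideal.span A) ^ (k1 + (j + 1))) p :=
    fun j => (descent hA (hk0 (k1 + j) (by omega)) (hass (j + 1))).2
  set v : ℕ → ℕ := fun j => vNumberAt K ((Ideal.span A) ^ (k1 + j)) p with hv
  let w : ℕ → ℕ := fun j => D + d * j - v j
  have hw : Antitone w := by
    refine antitone_nat_of_succ_le fun j => ?_
    have h1 := hmono j
    have h2 := hle j
    change D + d * (j + 1) - v (j + 1) ≤ D + d * j - v j
    change v j + d ≤ v (j + 1) at h1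
    rw [mul_add, mul_one]
    omega
  obtain ⟨j0, hj0⟩ : ∃ j0, w j0 = sInf (Set.range w) := Nat.sInf_mem (Set.range_nonempty w)
  refine ⟨(D : ℤ) - w j0 - d * k1, k1 + j0, fun k hk => ?_⟩
  obtain ⟨j, rfl⟩ := Nat.exists_eq_add_of_le (show k1 ≤ k by omega)
  have h1 : w j = w j0 := le_antisymm (hw (by omega)) (hj0 ▸ Nat.sInf_le ⟨j, rfl⟩)
  have h2 : v j + w j = D + d * j := by
    have := hle j
    change v j ≤ _ at this
    change v j + (D + d * j - v j) = _
    omega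
  have h3 : ((v j : ℕ) : ℤ) + w j = D + d * j := by exact_mod_cast h2
  rw [← h1]
  change (v j : ℤ) = _
  push_cast
  linarith [mul_add (d : ℤ) k1 j]

theorem initialDegree_span {d : ℕ} {A : Set S} (hA : ∀ f ∈ A, f.IsHomogeneous d)
    (hI : Ideal.span A ≠ ⊥) : initialDegree K (Ideal.span A) = d := by
  have hne : ∃ a ∈ A, a ≠ 0 := by
    by_contra hcon
    push Not at hcon
    exact hI (Ideal.span_eq_bot.2 hcon)
  obtain ⟨a, ha, ha0⟩ := hne
  have hmem : d ∈ {d | ∃ f ∈ Ideal.span A, f ≠ 0 ∧ f.IsHomogeneous d} :=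
    ⟨a, Ideal.subset_span ha, ha0, hA a ha⟩
  refine le_antisymm (Nat.sInf_le hmem) ?_
  refine le_csInf ⟨d, hmem⟩ ?_
  rintro e ⟨f, hf, hf0, hfe⟩
  by_contra hlt
  apply hf0
  have hf' : f ∈ Ideal.span A * ⊤ := by rwa [Ideal.mul_top]
  rw [← homogeneousComponent_eq_self hfe]
  rw [not_le] at hlt
  have h0 : homogeneousComponent e f ∈ (⊥ : Ideal S) := by
    refine hc_mul_mem hA (C := ⊤) (N := ⊥) (N' := ⊥) (fun _ _ _ => Submodule.mem_top) ?_ ?_ hf'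
    · intro a _ f hf
      exact Ideal.mul_mem_left _ _ hf
    · intro c _ m hm
      omega
  simpa using h0

theorem main_nonzero {d : ℕ} {A : Set S} (hA : ∀ f ∈ A, f.IsHomogeneous d)
    (hI : Ideal.span A ≠ ⊥) (hI' : Ideal.span A ≠ ⊤) :
    ∃ bp : Ideal S → ℤ,
      (∀ p ∈ stablePrimes K (Ideal.span A), ∃ N : ℕ, ∀ k : ℕ, N ≤ k →
        (vNumberAt K ((Ideal.span A) ^ k) p : ℤ) = (d : ℤ) * k + bp p) ∧
      ∃ b : ℤ, IsLeast (bp '' stablePrimes K (Ideal.span A)) b ∧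
        ∃ N : ℕ, ∀ k : ℕ, N ≤ k →
          (vNumber K ((Ideal.span A) ^ k) : ℤ) = (d : ℤ) * k + b := by
  classical
  have hlin := eventually_linear hA hI
  choose! bp N1 hbp using hlin
  refine ⟨bp, fun p hp => ⟨N1 p, hbp p hp⟩, ?_⟩
  obtain ⟨T, hT, hassT⟩ := finite_ass (Ideal.span A)
  choose N2 hN2 using eventually_ass hA hI
  -- a uniform bound
  obtain ⟨M, hM⟩ : ∃ M, ∀ p ∈ T, N1 p ≤ M ∧ N2 p ≤ M := by
    refine ⟨hT.toFinset.sup N1 + hT.toFinset.sup N2, fun p hp => ?_⟩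
    have hp' : p ∈ hT.toFinset := hT.mem_toFinset.2 hp
    have h1 : N1 p ≤ hT.toFinset.sup N1 := Finset.le_sup (f := N1) hp'
    have h2 : N2 p ≤ hT.toFinset.sup N2 := Finset.le_sup (f := N2) hp'
    omega
  have hstT : stablePrimes K (Ideal.span A) ⊆ T := by
    rintro p ⟨N, hN⟩
    exact hassT N (hN N le_rfl)
  have hst : ∀ k, M ≤ k → ∀ p ∈ assPrimes K ((Ideal.span A) ^ k),
      p ∈ stablePrimes K (Ideal.span A) := fun k hk p hp =>
    hN2 p k ((hM p (hassT k hp)).2.trans hk) hp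
  have hne : (stablePrimes K (Ideal.span A)).Nonempty := by
    have hnt : (Ideal.span A) ^ (M + 1) ≠ ⊤ := fun h =>
      hI' (top_le_iff.1 (h ▸ Ideal.pow_le_self (Nat.succ_ne_zero M)))
    have : Nontrivial (S ⧸ (Ideal.span A) ^ (M + 1)) := Ideal.Quotient.nontrivial_iff.2 hnt
    obtain ⟨p, hp⟩ := associatedPrimes.nonempty S (S ⧸ (Ideal.span A) ^ (M + 1))
    exact ⟨p, hst (M + 1) (Nat.le_succ M) p hp⟩
  obtain ⟨p0, hp0, hmin⟩ := Set.exists_min_image _ bp (hT.subset hstT) hne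
  refine ⟨bp p0, ⟨⟨p0, hp0, rfl⟩, ?_⟩, ?_⟩
  · rintro _ ⟨q, hq, rfl⟩
    exact hmin q hq
  obtain ⟨N0, hN0⟩ := id hp0
  refine ⟨max M N0, fun k hk => ?_⟩
  have hkM : M ≤ k := (le_max_left _ _).trans hk
  have hv : ∀ q ∈ stablePrimes K (Ideal.span A),
      (vNumberAt K ((Ideal.span A) ^ k) q : ℤ) = (d : ℤ) * k + bp q := fun q hq =>
    hbp q hq k ((hM q (hstT hq)).1.trans hkM)
  have hp0k := hN0 k ((le_max_right _ _).trans hk)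
  obtain ⟨f, hf, hfp⟩ := exists_vNumberAt (homI_pow hA k) hp0k
  have hmem : vNumberAt K ((Ideal.span A) ^ k) p0 ∈ {d | ∃ f : S, f.IsHomogeneous d ∧
      ((Ideal.span A) ^ k).colon (Ideal.span {f}) ∈ assPrimes K ((Ideal.span A) ^ k)} :=
    ⟨f, hf, by rw [colon_span_eq_iff.2 hfp]; exact hp0k⟩
  have h1 : vNumber K ((Ideal.span A) ^ k) ≤ vNumberAt K ((Ideal.span A) ^ k) p0 :=
    Nat.sInf_le hmem
  obtain ⟨g, hg, hgq⟩ := Nat.sInf_mem ⟨_, hmem⟩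
  have h2 := vNumberAt_le (J := (Ideal.span A) ^ k) hg (colon_span_eq_iff.1 rfl)
  have hq := hst k hkM _ hgq
  have h3 := hv _ hq
  have h4 := hmin _ hq
  have h5 := hv p0 hp0
  change _ ≤ vNumber K ((Ideal.span A) ^ k) at h2
  have h1' : (vNumber K ((Ideal.span A) ^ k) : ℤ) ≤ vNumberAt K ((Ideal.span A) ^ k) p0 := by
    exact_mod_cast h1
  have h2' := Int.ofNat_le.2 h2
  linarith

theorem main_zero :
    ∃ bp : Ideal S → ℤ,
      (∀ p ∈ stablePrimes K (⊥ : Ideal S), ∃ N : ℕ, ∀ k : ℕ, N ≤ k →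
        (vNumberAt K ((⊥ : Ideal S) ^ k) p : ℤ) = (initialDegree K (⊥ : Ideal S) : ℤ) * k + bp p) ∧
      ∃ b : ℤ, IsLeast (bp '' stablePrimes K (⊥ : Ideal S)) b ∧
        ∃ N : ℕ, ∀ k : ℕ, N ≤ k →
          (vNumber K ((⊥ : Ideal S) ^ k) : ℤ) = (initialDegree K (⊥ : Ideal S) : ℤ) * k + b := by
  have hpow : ∀ k, 1 ≤ k → (⊥ : Ideal S) ^ k = ⊥ := fun k hk => zero_pow (by omega)
  have hdeg : initialDegree K (⊥ : Ideal S) = 0 := by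
    unfold initialDegree
    convert Nat.sInf_empty
    ext d
    simp only [Set.mem_setOf_eq, Set.mem_empty_iff_false, iff_false]
    rintro ⟨f, hf, hf0, _⟩
    exact hf0 (by simpa using hf)
  have hone : AnnEq (⊥ : Ideal S) ⊥ 1 := fun r => by rw [mul_one]
  have hass : (⊥ : Ideal S) ∈ assPrimes K (⊥ : Ideal S) :=
    mem_assPrimes_iff.2 ⟨Ideal.isPrime_bot, 1, hone⟩
  have hst : (⊥ : Ideal S) ∈ stablePrimes K (⊥ : Ideal S) :=
    ⟨1, fun k hk => by rw [hpow k hk]; exact hass⟩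
  have heq : ∀ p ∈ stablePrimes K (⊥ : Ideal S), p = ⊥ := by
    rintro p ⟨N, hN⟩
    have h := hN (N + 1) (Nat.le_succ N)
    rw [hpow _ (by omega)] at h
    obtain ⟨hp, f, hf⟩ := mem_assPrimes_iff.1 h
    have hf0 : f ≠ 0 := by
      rintro rfl
      exact hp.ne_top ((Ideal.eq_top_iff_one p).2 ((hf 1).1 (by simp)))
    rw [eq_bot_iff]
    intro r hr
    have := (hf r).2 hr
    rw [Ideal.mem_bot, mul_eq_zero] at this
    exact this.resolve_right hf0
  have hv1 : vNumberAt K (⊥ : Ideal S) ⊥ = 0 :=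
    Nat.le_zero.1 (vNumberAt_le (isHomogeneous_one _ _) hone)
  have hv2 : vNumber K (⊥ : Ideal S) = 0 :=
    Nat.le_zero.1 (Nat.sInf_le ⟨1, isHomogeneous_one _ _, by
      rw [colon_span_eq_iff.2 hone]; exact hass⟩)
  refine ⟨fun _ => 0, fun p hp => ⟨1, fun k hk => ?_⟩, 0, ⟨⟨⊥, hst, rfl⟩, ?_⟩, 1, fun k hk => ?_⟩
  · rw [heq p hp, hpow k hk, hv1, hdeg]; simp
  · rintro _ ⟨q, _, rfl⟩
    exact le_rfl
  · rw [hpow k hk, hv2, hdeg]; simp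

end AuxGraded

/-- For a graded ideal `I` generated in a single degree: (a) for every stable prime `p`
there is an integer `b_p` with `v_p(I^k) = α(I)·k + b_p` for `k ≫ 0`, and (b)
`v(I^k) = α(I)·k + b` for `k ≫ 0`, where `b` is the minimum of the `b_p`. -/
theorem stmt2 {n : ℕ} (I : Ideal (MvPolynomial (Fin n) K))
    (hI : Equigenerated K I) (hI' : I ≠ ⊤) :
    ∃ bp : Ideal (MvPolynomial (Fin n) K) → ℤ,
      (∀ p ∈ stablePrimes K I, ∃ N : ℕ, ∀ k : ℕ, N ≤ k →
        (vNumberAt K (I ^ k) p : ℤ) = (initialDegree K I : ℤ) * k + bp p) ∧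
      ∃ b : ℤ, IsLeast (bp '' stablePrimes K I) b ∧
        ∃ N : ℕ, ∀ k : ℕ, N ≤ k →
          (vNumber K (I ^ k) : ℤ) = (initialDegree K I : ℤ) * k + b := by
  obtain ⟨d, A, hA, rfl⟩ := hI
  by_cases h0 : Ideal.span A = ⊥
  · rw [h0]
    exact main_zero
  · rw [initialDegree_span hA h0]
    exact main_nonzero hA h0 hI'

end
end

section
/- Let I be a monomial ideal of S = K[x_1,...,x_n] generated in a single degree, and write v(I^k) = α(I)·k + b and v_p(I^k) = α(I)·k + b_p for all k ≫ 0 and stable primes p of I (such integers b and b_p exist). Then b ≥ −1 and b_p ≥ −1 for every stable prime p of I. -/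
open MvPolynomial

noncomputable section

variable (K : Type*) [Field K]

theorem aux_key {n : ℕ} (I : Ideal (MvPolynomial (Fin n) K))
    (hmon : IsMonomialIdeal K I) (hα : 0 < initialDegree K I) (k : ℕ)
    (p : Ideal (MvPolynomial (Fin n) K)) (hp : p.IsPrime)
    (d : ℕ) (f : MvPolynomial (Fin n) K) (hf : f.IsHomogeneous d)
    (hc : (I ^ k).colon (Ideal.span {f}) = p) :
    initialDegree K I * k ≤ d + 1 := by
  obtain ⟨A, hA⟩ := hmon
  have hmem : ∀ m ∈ A, (monomial m (1 : K) : MvPolynomial (Fin n) K) ∈ I := by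
    intro m hm
    rw [hA]
    exact Ideal.subset_span ⟨m, hm, rfl⟩
  have hle : I ≤ (idealOfVars (Fin n) K) ^ initialDegree K I := by
    conv_lhs => rw [hA]
    rw [Ideal.span_le]
    rintro _ ⟨m, hm, rfl⟩
    have h1 : initialDegree K I ≤ m.degree :=
      Nat.sInf_le ⟨_, hmem m hm, by simp, isHomogeneous_monomial _ rfl⟩
    rw [SetLike.mem_coe, mem_pow_idealOfVars_iff]
    intro x hx
    have : x = m := by simpa using support_monomial_subset hx
    exact this ▸ h1
  have hlek : I ^ k ≤ (idealOfVars (Fin n) K) ^ (initialDegree K I * k) := by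
    rw [pow_mul]
    exact Ideal.pow_right_mono hle k
  have hfI : f ∉ I ^ k := by
    intro h
    apply hp.ne_top
    rw [← hc, Ideal.eq_top_iff_one, Submodule.mem_colon]
    intro s hs
    rw [one_smul]
    exact (Ideal.span_singleton_le_iff_mem _).2 h hs
  have hIp : I ^ k ≤ p := by
    intro x hx
    rw [← hc, Submodule.mem_colon]
    intro s _
    exact Ideal.mul_mem_right _ _ hx
  have hAne : A.Nonempty := by
    by_contra h
    rw [Set.not_nonempty_iff_eq_empty] at h
    subst h
    simp only [Set.image_empty, Ideal.span_empty] at hA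
    subst hA
    have : initialDegree K (⊥ : Ideal (MvPolynomial (Fin n) K)) = 0 := by
      unfold initialDegree
      convert Nat.sInf_empty
      ext e
      simp
    omega
  obtain ⟨m, hm⟩ := hAne
  have hmp : (monomial m (1 : K) : MvPolynomial (Fin n) K) ∈ p :=
    (hp.mem_of_pow_mem k (hIp (Ideal.pow_mem_pow (hmem m hm) k)))
  obtain ⟨i, hi⟩ : ∃ i, (X i : MvPolynomial (Fin n) K) ∈ p := by
    rw [monomial_eq, C_1, one_mul, Finsupp.prod, hp.prod_mem_iff] at hmp
    obtain ⟨i, _, hi⟩ := hmp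
    exact ⟨i, hp.mem_of_pow_mem _ hi⟩
  have hXf : X i * f ∈ I ^ k := by
    rw [← hc, Submodule.mem_colon] at hi
    exact hi f (Ideal.mem_span_singleton_self f)
  have hf0 : f ≠ 0 := fun h => hfI (h ▸ Ideal.zero_mem _)
  have hne : X i * f ≠ 0 := mul_ne_zero (X_ne_zero i) hf0
  obtain ⟨x, hx⟩ := support_nonempty.2 hne
  have h1 := (mem_pow_idealOfVars_iff _ _).1 (hlek hXf) x hx
  have h2 := ((isHomogeneous_X K i).mul hf).degree_eq_sum_deg_support hx
  rw [Finsupp.degree_apply] at h1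
  omega

/-- For an equigenerated monomial ideal `I`, the constants `b` and `b_p` in the eventually
linear functions `v(I^k) = α(I)·k + b` and `v_p(I^k) = α(I)·k + b_p` satisfy
`b ≥ -1` and `b_p ≥ -1`. -/
theorem stmt3 {n : ℕ} (I : Ideal (MvPolynomial (Fin n) K))
    (hmon : IsMonomialIdeal K I) (heq : Equigenerated K I)
    (b : ℤ) (N : ℕ)
    (hb : ∀ k : ℕ, N ≤ k → (vNumber K (I ^ k) : ℤ) = (initialDegree K I : ℤ) * k + b)
    (p : Ideal (MvPolynomial (Fin n) K)) (hp : p ∈ stablePrimes K I)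
    (bp : ℤ) (Np : ℕ)
    (hbp : ∀ k : ℕ, Np ≤ k →
      (vNumberAt K (I ^ k) p : ℤ) = (initialDegree K I : ℤ) * k + bp) :
    -1 ≤ b ∧ -1 ≤ bp := by
  have hex : ∀ (c : ℤ) (M : ℕ), 0 < initialDegree K I →
      ∃ k, M ≤ k ∧ 0 < (initialDegree K I : ℤ) * k + c := by
    intro c M hα
    refine ⟨M + c.natAbs + 1, by omega, ?_⟩
    have : (1 : ℤ) ≤ initialDegree K I := by exact_mod_cast hα
    have h3 : 1 * ((M + c.natAbs + 1 : ℕ) : ℤ) ≤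
        (initialDegree K I : ℤ) * ((M + c.natAbs + 1 : ℕ) : ℤ) :=
      mul_le_mul_of_nonneg_right this (by positivity)
    omega
  rcases Nat.eq_zero_or_pos (initialDegree K I) with h0 | hα
  · have h1 := hb N le_rfl
    have h2 := hbp Np le_rfl
    rw [h0] at h1 h2
    simp only [Nat.cast_zero, zero_mul, zero_add] at h1 h2
    omega
  constructor
  · obtain ⟨k, hk, hpos⟩ := hex b N hα
    have h1 := hb k hk
    have hv : 0 < vNumber K (I ^ k) := by omega
    obtain ⟨f, hf, hc⟩ := Nat.sInf_mem (Nat.nonempty_of_pos_sInf hv)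
    have h2 := aux_key K I hmon hα k _ hc.isPrime _ f hf rfl
    have h3 : ((initialDegree K I : ℤ) * k) ≤ (vNumber K (I ^ k) : ℤ) + 1 := by exact_mod_cast h2
    omega
  · obtain ⟨M, hM⟩ := hp
    obtain ⟨k, hk, hpos⟩ := hex bp Np hα
    have h1 := hbp k hk
    have hv : 0 < vNumberAt K (I ^ k) p := by omega
    obtain ⟨f, hf, hc⟩ := Nat.sInf_mem (Nat.nonempty_of_pos_sInf hv)
    have h2 := aux_key K I hmon hα k p (hM M le_rfl).isPrime _ f hf hc
    have h3 : ((initialDegree K I : ℤ) * k) ≤ (vNumberAt K (I ^ k) p : ℤ) + 1 := by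
      exact_mod_cast h2
    omega

end
end

section
/- Let I be an ideal generated by a fixed set of monomials in the variables x_1,...,x_n, regarded as an ideal of K[x_1,...,x_n] for a field K. Then the functions k ↦ v_p(I^k) for each stable prime p of I (for k ≫ 0), and the function k ↦ v(I^k) for k ≥ 1, do not depend on the field K; that is, if the same monomials are used to generate an ideal over two different fields, the corresponding v-functions agree. -/
open MvPolynomial

noncomputable section

variable (K : Type*) [Field K]

/-- The ideal generated by the monomials with exponents in `A`. -/
def monI {σ : Type*} (A : Set (σ →₀ ℕ)) : Ideal (MvPolynomial σ K) :=
  Ideal.span ((fun m => (monomial m (1 : K) : MvPolynomial σ K)) '' A)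

/-- The monomial prime generated by the variables in `B`. -/
def varI {σ : Type*} (B : Set σ) : Ideal (MvPolynomial σ K) :=
  Ideal.span ((fun i => (X i : MvPolynomial σ K)) '' B)

/-- Combinatorial form of `(I : x^m) = P_B`. -/
def Good {σ : Type*} (A : Set (σ →₀ ℕ)) (m : σ →₀ ℕ) (B : Set σ) : Prop :=
  ∀ u : σ →₀ ℕ, (∃ a ∈ A, a ≤ u + m) ↔ ∃ i ∈ B, u i ≠ 0

variable {K}

theorem mem_monI {σ : Type*} {A : Set (σ →₀ ℕ)} {f : MvPolynomial σ K} :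
    f ∈ monI K A ↔ ∀ s ∈ f.support, ∃ a ∈ A, a ≤ s :=
  mem_ideal_span_monomial_image

theorem mem_varI {σ : Type*} {B : Set σ} {f : MvPolynomial σ K} :
    f ∈ varI K B ↔ ∀ s ∈ f.support, ∃ i ∈ B, s i ≠ 0 :=
  mem_ideal_span_X_image

theorem monomial_mem_monI {σ : Type*} {A : Set (σ →₀ ℕ)} {s : σ →₀ ℕ} :
    monomial s (1 : K) ∈ monI K A ↔ ∃ a ∈ A, a ≤ s := by
  classical
  rw [mem_monI]
  simp [support_monomial]

theorem monomial_mem_varI {σ : Type*} {B : Set σ} {s : σ →₀ ℕ} :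
    monomial s (1 : K) ∈ varI K B ↔ ∃ i ∈ B, s i ≠ 0 := by
  classical
  rw [mem_varI]
  simp [support_monomial]

theorem varI_isPrime {σ : Type*} (B : Set σ) : (varI K B).IsPrime := by
  classical
  let φ : MvPolynomial σ K →ₐ[K] MvPolynomial σ K :=
    aeval (fun i => if i ∈ B then 0 else X i)
  have h1 : (Ideal.Quotient.mkₐ K (varI K B)).comp φ = Ideal.Quotient.mkₐ K (varI K B) := by
    apply MvPolynomial.algHom_ext
    intro i
    by_cases hi : i ∈ B
    · have : (X i : MvPolynomial σ K) ∈ varI K B := Ideal.subset_span ⟨i, hi, rfl⟩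
      simp [φ, hi, (Ideal.Quotient.eq_zero_iff_mem.2 this)]
    · simp [φ, hi]
  have h2 : varI K B = RingHom.ker φ := by
    apply le_antisymm
    · refine Ideal.span_le.2 ?_
      rintro _ ⟨i, hi, rfl⟩
      simp [φ, hi]
    · intro f hf
      rw [RingHom.mem_ker] at hf
      have := DFunLike.congr_fun h1 f
      rw [AlgHom.comp_apply, hf, map_zero] at this
      exact Ideal.Quotient.eq_zero_iff_mem.1 this.symm
  rw [h2]
  exact RingHom.ker_isPrime _

theorem monI_mul {σ : Type*} (A B : Set (σ →₀ ℕ)) :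
    monI K A * monI K B = monI K (Set.image2 (· + ·) A B) := by
  unfold monI
  rw [Ideal.span_mul_span']
  congr 1
  ext f
  simp only [Set.mem_mul, Set.mem_image, Set.mem_image2]
  constructor
  · rintro ⟨_, ⟨a, ha, rfl⟩, _, ⟨b, hb, rfl⟩, rfl⟩
    exact ⟨a + b, ⟨a, ha, b, hb, rfl⟩, by simp [monomial_mul]⟩
  · rintro ⟨_, ⟨a, ha, b, hb, rfl⟩, rfl⟩
    exact ⟨_, ⟨a, ha, rfl⟩, _, ⟨b, hb, rfl⟩, by simp [monomial_mul]⟩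

/-- The `k`-fold sumset. -/
def sumPow {σ : Type*} (A : Set (σ →₀ ℕ)) : ℕ → Set (σ →₀ ℕ)
  | 0 => {0}
  | k + 1 => Set.image2 (· + ·) (sumPow A k) A

theorem monI_pow {σ : Type*} (A : Set (σ →₀ ℕ)) (k : ℕ) :
    monI K A ^ k = monI K (sumPow A k) := by
  induction k with
  | zero => simp [sumPow, monI, ← C_apply, Ideal.one_eq_top]
  | succ k ih => rw [pow_succ, ih, monI_mul, sumPow]

theorem monomial_mul_mem {σ : Type*} {A : Set (σ →₀ ℕ)} {f : MvPolynomial σ K} {u : σ →₀ ℕ} :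
    monomial u (1 : K) * f ∈ monI K A ↔ ∀ m ∈ f.support, ∃ a ∈ A, a ≤ u + m := by
  classical
  rw [mem_monI]
  constructor
  · intro h m hm
    apply h
    rw [mem_support_iff, coeff_monomial_mul, one_mul]
    exact mem_support_iff.1 hm
  · intro h s hs
    rw [mem_support_iff, coeff_monomial_mul'] at hs
    split_ifs at hs with hus
    · obtain ⟨a, ha, hle⟩ := h (s - u) (mem_support_iff.2 (by simpa using hs))
      exact ⟨a, ha, hle.trans (le_of_eq (add_tsub_cancel_of_le hus))⟩
    · exact absurd rfl hs

theorem good_of_colon {σ : Type*} {A : Set (σ →₀ ℕ)} {f : MvPolynomial σ K} {B : Set σ}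
    (h : (monI K A).colon (Ideal.span {f}) = varI K B) : ∃ m ∈ f.support, Good A m B := by
  classical
  have hmem : ∀ u : σ →₀ ℕ, (∀ m ∈ f.support, ∃ a ∈ A, a ≤ u + m) ↔ ∃ i ∈ B, u i ≠ 0 := by
    intro u
    rw [← monomial_mul_mem (K := K), ← Ideal.mem_colon_span_singleton, h, monomial_mem_varI]
  by_contra hcon
  have hcon' : ∀ m : σ →₀ ℕ, ∃ u : σ →₀ ℕ, m ∈ f.support →
      (∃ a ∈ A, a ≤ u + m) ∧ ¬ ∃ i ∈ B, u i ≠ 0 := by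
    intro m
    by_cases hm : m ∈ f.support
    · by_contra hc
      refine hcon ⟨m, hm, fun u => ⟨fun hu => ?_, fun hu => (hmem u).2 hu m hm⟩⟩
      by_contra hn
      exact hc ⟨u, fun _ => ⟨hu, hn⟩⟩
    · exact ⟨0, fun h => absurd h hm⟩
  choose u hu using hcon'
  obtain ⟨i, hi, hne⟩ := (hmem (∑ m ∈ f.support, u m)).1 (by
    intro m hm
    obtain ⟨a, ha, hle⟩ := (hu m hm).1
    refine ⟨a, ha, hle.trans ?_⟩
    gcongr
    exact Finset.single_le_sum (f := u) (fun _ _ => zero_le) hm)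
  rw [Finsupp.finsetSum_apply] at hne
  obtain ⟨m, hm, hne⟩ := Finset.exists_ne_zero_of_sum_ne_zero hne
  exact (hu m hm).2 ⟨i, hi, hne⟩

theorem colon_of_good {σ : Type*} {A : Set (σ →₀ ℕ)} {m : σ →₀ ℕ} {B : Set σ}
    (h : Good A m B) :
    (monI K A).colon (Ideal.span {monomial m (1 : K)}) = varI K B := by
  classical
  ext g
  rw [Ideal.mem_colon_span_singleton, mul_comm, monomial_mul_mem, mem_varI]
  refine forall₂_congr fun s _ => ?_
  rw [add_comm, h s]

theorem leadingTerm_mem_monI {n : ℕ} {A : Set (Fin n →₀ ℕ)} (o : MonomialOrder (Fin n))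
    {f : MvPolynomial (Fin n) K} (hf : f ∈ monI K A) : o.leadingTerm f ∈ monI K A := by
  classical
  by_cases h : f = 0
  · simp [h]
  rw [mem_monI] at hf ⊢
  intro s hs
  rw [o.support_leadingTerm' h, Finset.mem_singleton] at hs
  subst hs
  exact hf _ (o.degree_mem_support h)

theorem card_support_sub_leadingTerm {n : ℕ} (o : MonomialOrder (Fin n))
    {f : MvPolynomial (Fin n) K} (hf : f ≠ 0) :
    (f - o.leadingTerm f).support.card < f.support.card := by
  classical
  apply Finset.card_lt_card
  rw [Finset.ssubset_iff_of_subset]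
  · refine ⟨o.degree f, o.degree_mem_support hf, ?_⟩
    rw [notMem_support_iff, coeff_sub, MonomialOrder.leadingTerm, coeff_monomial, if_pos rfl]
    exact sub_self _
  · intro s hs
    by_cases hsd : s = o.degree f
    · rw [hsd]
      exact o.degree_mem_support hf
    · rw [mem_support_iff] at hs ⊢
      rwa [coeff_sub, MonomialOrder.leadingTerm, coeff_monomial, if_neg (Ne.symm hsd),
        sub_zero] at hs

theorem exists_leadingTerm_pow {n : ℕ} {A : Set (Fin n →₀ ℕ)} (o : MonomialOrder (Fin n))
    (g : MvPolynomial (Fin n) K) :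
    ∀ (c : ℕ) (f : MvPolynomial (Fin n) K), f.support.card ≤ c → ∀ j : ℕ,
      o.leadingTerm g ^ j * (g * f) ∈ monI K A → ∃ r, o.leadingTerm g ^ r * f ∈ monI K A := by
  classical
  intro c
  induction c with
  | zero =>
    intro f hc j _
    have : f = 0 := by simpa using hc
    exact ⟨0, by simp [this]⟩
  | succ c ih =>
    intro f hc j hj
    by_cases hf : f = 0
    · exact ⟨0, by simp [hf]⟩
    by_cases hg : g = 0
    · exact ⟨1, by simp [hg]⟩
    have hlt : o.leadingTerm g ^ (j + 1) * o.leadingTerm f ∈ monI K A := by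
      have := leadingTerm_mem_monI o hj
      have hpow : o.leadingTerm (o.leadingTerm g ^ j) = o.leadingTerm g ^ j := by
        simp only [MonomialOrder.leadingTerm, monomial_pow]
        exact o.leadingTerm_monomial _ _
      rwa [o.leadingTerm_mul, o.leadingTerm_mul, hpow, ← mul_assoc, ← pow_succ] at this
    obtain ⟨r, hr⟩ := ih (f - o.leadingTerm f)
      (by have := card_support_sub_leadingTerm o hf; omega) (j + 1) (by
        have h1 := Ideal.mul_mem_left _ (o.leadingTerm g) hj
        have h2 := Ideal.mul_mem_left _ g hlt
        have h3 := Ideal.sub_mem _ h1 h2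
        convert h3 using 1
        ring)
    refine ⟨r + (j + 1), ?_⟩
    have h1 := Ideal.mul_mem_left _ (o.leadingTerm g ^ (j + 1)) hr
    have h2 := Ideal.mul_mem_left _ (o.leadingTerm g ^ r) hlt
    convert Ideal.add_mem _ h1 h2 using 1
    ring

theorem leadingTerm_mem {n : ℕ} {A : Set (Fin n →₀ ℕ)} (o : MonomialOrder (Fin n))
    {f : MvPolynomial (Fin n) K} {p : Ideal (MvPolynomial (Fin n) K)} (hp : p.IsPrime)
    (h : (monI K A).colon (Ideal.span {f}) = p) {g : MvPolynomial (Fin n) K} (hg : g ∈ p) :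
    o.leadingTerm g ∈ p := by
  rw [← h, Ideal.mem_colon_span_singleton] at hg
  obtain ⟨r, hr⟩ := exists_leadingTerm_pow o g _ f le_rfl 0 (by simpa using hg)
  rw [← Ideal.mem_colon_span_singleton, h] at hr
  exact hp.mem_of_pow_mem _ hr

theorem eq_varI {n : ℕ} {A : Set (Fin n →₀ ℕ)}
    {f : MvPolynomial (Fin n) K} {p : Ideal (MvPolynomial (Fin n) K)} (hp : p.IsPrime)
    (h : (monI K A).colon (Ideal.span {f}) = p) : ∃ B, p = varI K B := by
  classical
  have hmon : ∀ (c : ℕ) (g : MvPolynomial (Fin n) K), g.support.card ≤ c → g ∈ p →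
      ∀ s ∈ g.support, monomial s (1 : K) ∈ p := by
    let o : MonomialOrder (Fin n) := MonomialOrder.lex
    intro c
    induction c with
    | zero =>
      intro g hc _ s hs
      have : g = 0 := by simpa using hc
      simp [this] at hs
    | succ c ih =>
      intro g hc hgp s hs
      by_cases hg : g = 0
      · simp [hg] at hs
      have hlt := leadingTerm_mem o hp h hgp
      by_cases hsd : s = o.degree g
      · have h1 := Ideal.mul_mem_left _ (C (o.leadingCoeff g)⁻¹) hlt
        have hne : o.leadingCoeff g ≠ 0 := by simpa using hg
        rwa [MonomialOrder.leadingTerm, C_mul_monomial, inv_mul_cancel₀ hne, ← hsd] at h1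
      · refine ih (g - o.leadingTerm g) ?_ (Ideal.sub_mem _ hgp hlt) s ?_
        · have := card_support_sub_leadingTerm o hg
          omega
        · rw [mem_support_iff] at hs ⊢
          rw [coeff_sub, MonomialOrder.leadingTerm, coeff_monomial, if_neg (Ne.symm hsd), sub_zero]
          exact hs
  refine ⟨{i | X i ∈ p}, le_antisymm ?_ (Ideal.span_le.2 ?_)⟩
  · intro g hg
    rw [mem_varI]
    intro s hs
    have h1 := hmon _ g le_rfl hg s hs
    rw [← prod_X_pow_eq_monomial, Ideal.IsPrime.prod_mem_iff] at h1
    obtain ⟨i, hi, hXi⟩ := h1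
    exact ⟨i, hp.mem_of_pow_mem _ hXi, Finsupp.mem_support_iff.1 hi⟩
  · rintro _ ⟨i, hi, rfl⟩
    exact hi

theorem mem_assPrimes_iff_s4 {n : ℕ} {I p : Ideal (MvPolynomial (Fin n) K)} :
    p ∈ assPrimes K I ↔ p.IsPrime ∧ ∃ f : MvPolynomial (Fin n) K, I.colon (Ideal.span {f}) = p := by
  have key : ∀ f : MvPolynomial (Fin n) K,
      (⊥ : Submodule (MvPolynomial (Fin n) K) (MvPolynomial (Fin n) K ⧸ I)).colon
        {Ideal.Quotient.mk I f} = I.colon (Ideal.span {f}) := by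
    intro f
    ext g
    rw [Submodule.mem_colon_singleton, Ideal.mem_colon_span_singleton, Submodule.mem_bot,
      ← Ideal.Quotient.eq_zero_iff_mem]
    exact Iff.rfl
  unfold assPrimes
  rw [AssociatedPrimes.mem_iff, isAssociatedPrime_iff]
  refine and_congr_right fun _ => ⟨?_, ?_⟩
  · rintro ⟨x, hx⟩
    obtain ⟨f, rfl⟩ := Ideal.Quotient.mk_surjective x
    exact ⟨f, by rw [hx, key]⟩
  · rintro ⟨f, hf⟩
    exact ⟨Ideal.Quotient.mk I f, by rw [key, hf]⟩

theorem varI_mem_assPrimes_iff {n : ℕ} {A : Set (Fin n →₀ ℕ)} {B : Set (Fin n)} :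
    varI K B ∈ assPrimes K (monI K A) ↔ ∃ m, Good A m B := by
  rw [mem_assPrimes_iff_s4]
  constructor
  · rintro ⟨_, f, hf⟩
    obtain ⟨m, _, hm⟩ := good_of_colon hf
    exact ⟨m, hm⟩
  · rintro ⟨m, hm⟩
    exact ⟨varI_isPrime B, _, colon_of_good hm⟩

theorem degree_of_mem {σ : Type*} {f : MvPolynomial σ K} {d : ℕ} (hf : f.IsHomogeneous d)
    {m : σ →₀ ℕ} (hm : m ∈ f.support) : m.degree = d := by
  rw [Finsupp.degree_eq_weight_one]
  exact hf (mem_support_iff.1 hm)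

theorem vNumberAt_eq_s4 {n : ℕ} (A : Set (Fin n →₀ ℕ)) (B : Set (Fin n)) :
    vNumberAt K (monI K A) (varI K B) = sInf {d | ∃ m, m.degree = d ∧ Good A m B} := by
  unfold vNumberAt
  congr 1
  ext d
  constructor
  · rintro ⟨f, hf, h⟩
    obtain ⟨m, hm, hg⟩ := good_of_colon h
    exact ⟨m, degree_of_mem hf hm, hg⟩
  · rintro ⟨m, hm, hg⟩
    exact ⟨monomial m 1, isHomogeneous_monomial _ hm, colon_of_good hg⟩

theorem vNumber_eq {n : ℕ} (A : Set (Fin n →₀ ℕ)) :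
    vNumber K (monI K A) = sInf {d | ∃ m, m.degree = d ∧ ∃ B, Good A m B} := by
  unfold vNumber
  congr 1
  ext d
  constructor
  · rintro ⟨f, hf, h⟩
    obtain ⟨B, hB⟩ := eq_varI (mem_assPrimes_iff_s4.1 h).1 rfl
    obtain ⟨m, hm, hg⟩ := good_of_colon hB
    exact ⟨m, degree_of_mem hf hm, B, hg⟩
  · rintro ⟨m, hm, B, hg⟩
    refine ⟨monomial m 1, isHomogeneous_monomial _ hm, ?_⟩
    rw [colon_of_good hg]
    exact varI_mem_assPrimes_iff.2 ⟨m, hg⟩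

variable (K)

/-- The v-functions of an ideal generated by a fixed set of monomials do not depend on the
base field: `v(I_K^k) = v(I_L^k)` for `k ≥ 1`, a monomial prime is stable for `I_K` iff it
is stable for `I_L`, and the corresponding local v-functions eventually agree. -/
theorem stmt4 (L : Type*) [Field L] {n : ℕ} (A : Set (Fin n →₀ ℕ))
    (IK : Ideal (MvPolynomial (Fin n) K)) (IL : Ideal (MvPolynomial (Fin n) L))
    (hK : IK = Ideal.span ((fun m => (monomial m (1 : K) : MvPolynomial (Fin n) K)) '' A))
    (hL : IL = Ideal.span ((fun m => (monomial m (1 : L) : MvPolynomial (Fin n) L)) '' A)) :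
    (∀ k : ℕ, 1 ≤ k → vNumber K (IK ^ k) = vNumber L (IL ^ k)) ∧
    (∀ B : Set (Fin n),
      (Ideal.span ((fun i => (X i : MvPolynomial (Fin n) K)) '' B) ∈ stablePrimes K IK ↔
        Ideal.span ((fun i => (X i : MvPolynomial (Fin n) L)) '' B) ∈ stablePrimes L IL) ∧
      (Ideal.span ((fun i => (X i : MvPolynomial (Fin n) K)) '' B) ∈ stablePrimes K IK →
        ∃ N : ℕ, ∀ k : ℕ, N ≤ k →
          vNumberAt K (IK ^ k) (Ideal.span ((fun i => (X i : MvPolynomial (Fin n) K)) '' B)) =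
          vNumberAt L (IL ^ k)
            (Ideal.span ((fun i => (X i : MvPolynomial (Fin n) L)) '' B)))) := by
  change IK = monI K A at hK
  change IL = monI L A at hL
  change _ ∧ ∀ B : Set (Fin n), (varI K B ∈ stablePrimes K IK ↔ varI L B ∈ stablePrimes L IL) ∧
    (varI K B ∈ stablePrimes K IK → ∃ N : ℕ, ∀ k : ℕ, N ≤ k →
      vNumberAt K (IK ^ k) (varI K B) = vNumberAt L (IL ^ k) (varI L B))
  subst hK hL
  refine ⟨fun k _ => ?_, fun B => ⟨?_, fun _ => ⟨0, fun k _ => ?_⟩⟩⟩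
  · rw [monI_pow, monI_pow, vNumber_eq, vNumber_eq]
  · simp only [stablePrimes, Set.mem_ofPred_eq, monI_pow, varI_mem_assPrimes_iff]
  · rw [monI_pow, monI_pow, vNumberAt_eq_s4, vNumberAt_eq_s4]

end
end

section
/- Assume the monomial Simon conjecture: every monomial ideal of S generated in a single degree d with linear quotients can be extended to m^d by linear quotients. Then for any monomial ideal I ⊂ S generated in a single degree and having linear quotients, one has α(I) − 1 ≤ v(I) ≤ α(I). -/
open MvPolynomial

noncomputable section

variable (K : Type*) [Field K]

/-- The monomial with exponent vector `m`. -/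
def mon {σ : Type*} (m : σ →₀ ℕ) : MvPolynomial σ K := monomial m 1

/-- The degree of an exponent vector. -/
def mdeg {σ : Type*} (m : σ →₀ ℕ) : ℕ := m.sum fun _ e => e

/-- `U` is the minimal monomial generating set `G(I)` of the monomial ideal `I`. -/
def MinimalGens {σ : Type*} [DecidableEq σ] (I : Ideal (MvPolynomial σ K))
    (U : Finset (σ →₀ ℕ)) : Prop :=
  I = Ideal.span (mon K '' (U : Set (σ →₀ ℕ))) ∧
    ∀ m ∈ U, mon K m ∉ Ideal.span (mon K '' ((U.erase m : Finset (σ →₀ ℕ)) : Set (σ →₀ ℕ)))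

/-- An ideal generated by (a subset of the) variables. -/
def GenByVars {σ : Type*} (J : Ideal (MvPolynomial σ K)) : Prop :=
  ∃ B : Set σ, J = Ideal.span ((fun i => (X i : MvPolynomial σ K)) '' B)

/-- The monomial ideal `I` has linear quotients: its minimal monomial generating set can be
ordered `u_1, …, u_m` so that `(u_1, …, u_{j-1}) : u_j` is generated by variables for
`j = 2, …, m`. -/
def HasLinearQuotients {σ : Type*} [DecidableEq σ] (I : Ideal (MvPolynomial σ K)) : Prop :=
  ∃ L : List (σ →₀ ℕ), L.Nodup ∧ MinimalGens K I L.toFinset ∧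
    ∀ (j : ℕ) (hj : j < L.length), 0 < j →
      GenByVars K ((Ideal.span (mon K '' {m | m ∈ L.take j})).colon
        (Ideal.span {mon K (L.get ⟨j, hj⟩)}))

/-- The monomial ideal `I` can be extended by linear quotients by the set `V` of new
monomial generators (`V = G(J) \ G(I)`): `V` can be ordered `v_1, …, v_r` so that
`(I, v_1, …, v_{j-1}) : v_j` is generated by variables for all `j = 1, …, r`. -/
def ExtendsByLinQuots {σ : Type*} (I : Ideal (MvPolynomial σ K)) (V : Set (σ →₀ ℕ)) : Prop :=
  ∃ L : List (σ →₀ ℕ), L.Nodup ∧ {m | m ∈ L} = V ∧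
    ∀ (j : ℕ) (hj : j < L.length),
      GenByVars K ((I ⊔ Ideal.span (mon K '' {m | m ∈ L.take j})).colon
        (Ideal.span {mon K (L.get ⟨j, hj⟩)}))

theorem genByVars_isPrime {σ : Type*} {J : Ideal (MvPolynomial σ K)} (h : GenByVars K J) :
    J.IsPrime := by
  classical
  obtain ⟨B, rfl⟩ := h
  set J := Ideal.span ((fun i => (X i : MvPolynomial σ K)) '' B) with hJ
  let φ : MvPolynomial σ K →ₐ[K] MvPolynomial σ K := aeval (fun i => if i ∈ B then 0 else X i)
  have h1 : (Ideal.Quotient.mkₐ K J).comp φ = Ideal.Quotient.mkₐ K J := by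
    apply MvPolynomial.algHom_ext
    intro i
    by_cases hi : i ∈ B
    · have : (X i : MvPolynomial σ K) ∈ J := Ideal.subset_span ⟨i, hi, rfl⟩
      have h2 := Ideal.Quotient.eq_zero_iff_mem.2 this
      simp [φ, hi, h2]
    · simp [φ, hi]
  have h2 : J = RingHom.ker φ := by
    apply le_antisymm
    · rw [hJ, Ideal.span_le]
      rintro _ ⟨i, hi, rfl⟩
      simp [φ, hi]
    · intro p hp
      have hp' : φ p = 0 := hp
      have h3 := DFunLike.congr_fun h1 p
      simp only [AlgHom.comp_apply, hp', map_zero] at h3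
      exact Ideal.Quotient.eq_zero_iff_mem.1 h3.symm
  rw [h2]
  exact RingHom.ker_isPrime _

theorem colon_mem_assPrimes {σ : Type*} {I : Ideal (MvPolynomial σ K)} {f : MvPolynomial σ K}
    (h : (I.colon (Ideal.span {f})).IsPrime) :
    I.colon (Ideal.span {f}) ∈ assPrimes K I := by
  refine ⟨h, Ideal.Quotient.mk I f, ?_⟩
  have : (⊥ : Submodule (MvPolynomial σ K) (MvPolynomial σ K ⧸ I)).colon
      {Ideal.Quotient.mk I f} = I.colon (Ideal.span {f}) := by
    ext r
    rw [Submodule.mem_colon_singleton, Ideal.mem_colon_span_singleton, Submodule.mem_bot,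
      ← Ideal.Quotient.eq_zero_iff_mem, map_mul]
    rfl
  rw [this, h.radical]

theorem mem_span_mon {σ : Type*} {x : MvPolynomial σ K} {s : Set (σ →₀ ℕ)} :
    x ∈ Ideal.span (mon K '' s) ↔ ∀ xi ∈ x.support, ∃ si ∈ s, si ≤ xi :=
  mem_ideal_span_monomial_image

theorem mdeg_eq {σ : Type*} (m : σ →₀ ℕ) : mdeg m = m.degree := rfl

theorem mon_homog {σ : Type*} (m : σ →₀ ℕ) : (mon K m).IsHomogeneous (mdeg m) :=
  isHomogeneous_monomial _ rfl

theorem le_of_homog {σ : Type*} {I : Ideal (MvPolynomial σ K)} {U : Finset (σ →₀ ℕ)} {d : ℕ}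
    (hU : I = Ideal.span (mon K '' (U : Set (σ →₀ ℕ)))) (hd : ∀ m ∈ U, mdeg m = d)
    {f : MvPolynomial σ K} (hf : f ∈ I) (h0 : f ≠ 0) {e : ℕ} (he : f.IsHomogeneous e) :
    d ≤ e := by
  obtain ⟨m, hm⟩ := support_nonempty.2 h0
  rw [hU, mem_span_mon] at hf
  obtain ⟨u, hu, hum⟩ := hf m hm
  have h1 : m.degree = e := by
    have := he (mem_support_iff.1 hm)
    rw [Finsupp.degree_eq_weight_one]
    exact this
  rw [← hd u hu, mdeg_eq, ← h1]
  exact Finsupp.degree_mono hum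

theorem vset_lower {σ : Type*} {I : Ideal (MvPolynomial σ K)} {U : Finset (σ →₀ ℕ)} {d : ℕ}
    (hU : I = Ideal.span (mon K '' (U : Set (σ →₀ ℕ)))) (hd : ∀ m ∈ U, mdeg m = d)
    (hne : U.Nonempty) {e : ℕ} {f : MvPolynomial σ K} (hf : f.IsHomogeneous e)
    (hP : I.colon (Ideal.span {f}) ∈ assPrimes K I) : d - 1 ≤ e := by
  have hp : (I.colon (Ideal.span {f})).IsPrime := hP.1
  obtain ⟨u, hu⟩ := hne
  have hf0 : f ≠ 0 := by
    rintro rfl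
    apply hp.ne_top
    rw [Ideal.eq_top_iff_one, Ideal.mem_colon_span_singleton]
    simp
  have huI : mon K u ∈ I := by rw [hU]; exact Ideal.subset_span ⟨u, hu, rfl⟩
  have huP : mon K u ∈ I.colon (Ideal.span {f}) := by
    rw [Ideal.mem_colon_span_singleton]; exact I.mul_mem_right _ huI
  obtain ⟨i, hi⟩ : ∃ i, (X i : MvPolynomial σ K) ∈ I.colon (Ideal.span {f}) := by
    rw [mon, monomial_eq, C_1, one_mul, Finsupp.prod] at huP
    obtain ⟨i, -, hi⟩ := hp.prod_mem_iff.1 huP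
    exact ⟨i, hp.mem_of_pow_mem _ hi⟩
  rw [Ideal.mem_colon_span_singleton] at hi
  have := le_of_homog K hU hd hi (mul_ne_zero (X_ne_zero i) hf0) ((isHomogeneous_X K i).mul hf)
  omega

theorem vset_nonempty {n : ℕ}
    {I : Ideal (MvPolynomial (Fin n) K)} {U : Finset (Fin n →₀ ℕ)} {d : ℕ}
    (hU : I = Ideal.span (mon K '' (U : Set (Fin n →₀ ℕ)))) (hd : ∀ m ∈ U, mdeg m = d)
    (hne : U.Nonempty) (hd0 : d ≠ 0)
    (hE : ExtendsByLinQuots K I ({m : Fin n →₀ ℕ | mdeg m = d} \ (U : Set (Fin n →₀ ℕ)))) :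
    ∃ e ≤ d, ∃ f : MvPolynomial (Fin n) K, f.IsHomogeneous e ∧
      I.colon (Ideal.span {f}) ∈ assPrimes K I := by
  obtain ⟨L, -, hL, hq⟩ := hE
  by_cases hlen : 0 < L.length
  · have h1 := hq 0 hlen
    simp only [List.take_zero, List.not_mem_nil, Set.setOf_false, Set.image_empty,
      Ideal.span_empty, sup_bot_eq] at h1
    have h2 : L.get ⟨0, hlen⟩ ∈ {m | m ∈ L} := List.get_mem _ _
    rw [hL] at h2
    have h3 : mdeg (L.get ⟨0, hlen⟩) = d := h2.1
    exact ⟨d, le_rfl, _, h3 ▸ mon_homog K _, colon_mem_assPrimes K (genByVars_isPrime K h1)⟩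
  · have hLe : L = [] := List.length_eq_zero_iff.1 (by omega)
    have hall : ∀ m : Fin n →₀ ℕ, mdeg m = d → m ∈ U := by
      intro m hm
      by_contra hmU
      have : m ∈ {m | m ∈ L} := by rw [hL]; exact ⟨hm, hmU⟩
      simp [hLe] at this
    obtain ⟨u, hu⟩ := hne
    obtain ⟨i, -⟩ : ∃ i, u i ≠ 0 := by
      by_contra! h
      have : u = 0 := Finsupp.ext h
      apply hd0
      rw [← hd u hu, this]
      simp [mdeg_eq]
    let w : Fin n →₀ ℕ := Finsupp.single i (d - 1)
    have hw : mdeg w = d - 1 := Finsupp.degree_single _ _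
    have hfI : mon K w ∉ I := by
      intro h
      have := le_of_homog K hU hd h (by simp [mon]) (mon_homog K w)
      omega
    have hX : ∀ j, (X j : MvPolynomial (Fin n) K) * mon K w ∈ I := by
      intro j
      have : (X j : MvPolynomial (Fin n) K) * mon K w = mon K (Finsupp.single j 1 + w) := by
        simp [X, mon, monomial_mul]
      rw [this, hU]
      refine Ideal.subset_span ⟨_, hall _ ?_, rfl⟩
      rw [mdeg_eq] at hw ⊢
      rw [map_add, hw, Finsupp.degree_single]
      omega
    refine ⟨d - 1, by omega, mon K w, hw ▸ mon_homog K w, colon_mem_assPrimes K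
      (genByVars_isPrime K ⟨Set.univ, ?_⟩)⟩
    have hle : Ideal.span ((fun i => (X i : MvPolynomial (Fin n) K)) '' Set.univ) ≤
        I.colon (Ideal.span {mon K w}) := by
      rw [Ideal.span_le]
      rintro _ ⟨j, -, rfl⟩
      exact Ideal.mem_colon_span_singleton.2 (hX j)
    refine le_antisymm ?_ hle
    intro g hg
    have hgc : g - C (constantCoeff g) ∈
        Ideal.span ((fun i => (X i : MvPolynomial (Fin n) K)) '' Set.univ) := by
      rw [mem_ideal_span_X_image]
      intro m hm
      by_contra! h
      have : m = 0 := Finsupp.ext fun j => h j trivial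
      subst this
      simp [constantCoeff_eq] at hm
    have h4 := sub_mem hg (hle hgc)
    rw [sub_sub_cancel, Ideal.mem_colon_span_singleton] at h4
    by_cases hc : constantCoeff g = 0
    · simpa [hc] using hgc
    · exfalso
      apply hfI
      have := I.mul_mem_left (C (constantCoeff g)⁻¹) h4
      rwa [← mul_assoc, ← C_mul, inv_mul_cancel₀ hc, C_1, one_mul] at this

/-- Assuming the monomial Simon conjecture, every equigenerated monomial ideal `I` with
linear quotients satisfies `α(I) - 1 ≤ v(I) ≤ α(I)`. -/
theorem stmt6 {n : ℕ}
    (hSimon : ∀ (d : ℕ) (J : Ideal (MvPolynomial (Fin n) K)) (V : Finset (Fin n →₀ ℕ)),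
      MinimalGens K J V → (∀ m ∈ V, mdeg m = d) → HasLinearQuotients K J →
      ExtendsByLinQuots K J ({m : Fin n →₀ ℕ | mdeg m = d} \ (V : Set (Fin n →₀ ℕ))))
    (I : Ideal (MvPolynomial (Fin n) K)) (U : Finset (Fin n →₀ ℕ)) (d : ℕ)
    (hU : MinimalGens K I U) (hd : ∀ m ∈ U, mdeg m = d)
    (hlq : HasLinearQuotients K I) :
    initialDegree K I - 1 ≤ vNumber K I ∧ vNumber K I ≤ initialDegree K I := by
  have hU1 := hU.1
  rcases U.eq_empty_or_nonempty with rfl | hne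
  · have hI : I = ⊥ := by rw [hU1]; simp
    have h0 : initialDegree K I = 0 := by
      rw [initialDegree, Nat.sInf_eq_zero]
      right
      ext e
      simp [hI]
    have hv : vNumber K I = 0 := by
      rw [vNumber, Nat.sInf_eq_zero]
      left
      refine ⟨1, isHomogeneous_one _ _, colon_mem_assPrimes K (genByVars_isPrime K ⟨∅, ?_⟩)⟩
      ext r
      rw [Ideal.mem_colon_span_singleton]
      simp [hI]
    omega
  · have hα : initialDegree K I = d := by
      obtain ⟨u, hu⟩ := hne
      have hm : d ∈ {d | ∃ f ∈ I, f ≠ 0 ∧ f.IsHomogeneous d} :=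
        ⟨mon K u, by rw [hU1]; exact Ideal.subset_span ⟨u, hu, rfl⟩, by simp [mon],
          hd u hu ▸ mon_homog K u⟩
      refine le_antisymm (Nat.sInf_le hm) ?_
      obtain ⟨f, hf, hf0, hfh⟩ := Nat.sInf_mem ⟨d, hm⟩
      exact le_of_homog K hU1 hd hf hf0 hfh
    rw [hα]
    by_cases hd0 : d = 0
    · obtain ⟨u, hu⟩ := hne
      have hu0 : u = 0 := by
        have := hd u hu
        rw [hd0, mdeg_eq, Finsupp.degree_eq_zero_iff] at this
        exact this
      have hI : I = ⊤ := by
        rw [Ideal.eq_top_iff_one, hU1]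
        exact Ideal.subset_span ⟨u, hu, by rw [hu0]; rfl⟩
      have hv : vNumber K I = 0 := by
        rw [vNumber, Nat.sInf_eq_zero]
        right
        ext e
        simp only [Set.mem_setOf_eq, Set.mem_empty_iff_false, iff_false]
        rintro ⟨f, -, hf⟩
        apply hf.1.ne_top
        rw [hI]
        exact Submodule.top_colon
      omega
    · obtain ⟨e, hed, hmem⟩ := vset_nonempty K hU1 hd hne hd0 (hSimon d I U hU hd hlq)
      refine ⟨?_, (Nat.sInf_le hmem).trans hed⟩
      obtain ⟨f, hf, hP⟩ := Nat.sInf_mem (s := {d | ∃ f : MvPolynomial (Fin n) K, f.IsHomogeneous d ∧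
        I.colon (Ideal.span {f}) ∈ assPrimes K I}) ⟨e, hmem⟩
      exact vset_lower K hU1 hd hne hf hP

end
end

section
/- Assume the monomial Simon conjecture: every monomial ideal of S generated in a single degree d with linear quotients can be extended to m^d by linear quotients. Let I ⊂ S be a monomial ideal generated in a single degree such that every power I^k has linear quotients. Then either v(I^k) = α(I)·k − 1 for all k ≫ 0, or v(I^k) = α(I)·k for all k ≫ 0. -/
open MvPolynomial

noncomputable section

variable (K : Type*) [Field K]

/-! ### Auxiliary lemmas -/

lemma colonPrime_mem_ass {σ : Type*} (Q : Ideal (MvPolynomial σ K)) (f : MvPolynomial σ K)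
    (hp : (Q.colon (Ideal.span {f})).IsPrime) : Q.colon (Ideal.span {f}) ∈ assPrimes K Q := by
  refine ⟨hp, Ideal.Quotient.mk Q f, ?_⟩
  have : (⊥ : Submodule (MvPolynomial σ K) (MvPolynomial σ K ⧸ Q)).colon
      {Ideal.Quotient.mk Q f} = Q.colon (Ideal.span {f}) := by
    ext r
    rw [Submodule.mem_colon_singleton, Ideal.mem_colon_span_singleton, Submodule.mem_bot,
      ← Ideal.Quotient.eq_zero_iff_mem, map_mul]
    rfl
  rw [this, hp.isRadical.radical]

lemma isPrime_span_vars {σ : Type*} (B : Set σ) :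
    (Ideal.span ((fun i => (X i : MvPolynomial σ K)) '' B)).IsPrime := by
  classical
  set p := Ideal.span ((fun i => (X i : MvPolynomial σ K)) '' B) with hp
  let φ : MvPolynomial σ K →ₐ[K] MvPolynomial σ K := aeval (fun i => if i ∈ B then 0 else X i)
  have h1 : (Ideal.Quotient.mkₐ K p).comp φ = Ideal.Quotient.mkₐ K p := by
    ext i
    by_cases hi : i ∈ B
    · have : Ideal.Quotient.mk p (X i) = 0 :=
        Ideal.Quotient.eq_zero_iff_mem.2 (Ideal.subset_span ⟨i, hi, rfl⟩)
      simp [φ, hi, this]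
    · simp [φ, hi]
  have h2 : p = RingHom.ker φ := by
    apply le_antisymm
    · rw [hp, Ideal.span_le]
      rintro _ ⟨i, hi, rfl⟩
      simp [φ, hi, RingHom.mem_ker]
    · intro g hg
      rw [RingHom.mem_ker] at hg
      have := DFunLike.congr_fun h1 g
      simp only [AlgHom.comp_apply, hg, map_zero] at this
      exact Ideal.Quotient.eq_zero_iff_mem.1 this.symm
  rw [h2]
  exact RingHom.ker_isPrime _

/-- exponent `a` lies in the up-closure of `P`. -/
def UpCl {σ : Type*} (P : Set (σ →₀ ℕ)) (a : σ →₀ ℕ) : Prop := ∃ u ∈ P, u ≤ a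

lemma mem_span_mon_s7 {σ : Type*} (P : Set (σ →₀ ℕ)) (g : MvPolynomial σ K) :
    g ∈ Ideal.span (mon K '' P) ↔ ∀ a ∈ g.support, UpCl P a :=
  mem_ideal_span_monomial_image

lemma mon_mem_span {σ : Type*} (P : Set (σ →₀ ℕ)) (a : σ →₀ ℕ) :
    mon K a ∈ Ideal.span (mon K '' P) ↔ UpCl P a := by
  classical
  rw [mem_span_mon_s7]
  simp [mon, support_monomial]

lemma mon_mul {σ : Type*} (a b : σ →₀ ℕ) : mon K a * mon K b = mon K (a + b) := by
  simp [mon, monomial_mul]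

/-- `m` is a monomial socle-like element with colon the prime of `B`. -/
def Wit {σ : Type*} (P : Set (σ →₀ ℕ)) (B : Set σ) (m : σ →₀ ℕ) : Prop :=
  (∀ i ∈ B, UpCl P (m + Finsupp.single i 1)) ∧ ∀ w, UpCl P (w + m) → ∃ i ∈ B, w i ≠ 0

lemma Wit.nonempty {σ : Type*} {P : Set (σ →₀ ℕ)} {B : Set σ} {m : σ →₀ ℕ}
    (h : Wit P B m) (hP : P.Nonempty) : B.Nonempty := by
  obtain ⟨u, hu⟩ := hP
  obtain ⟨i, hi, -⟩ := h.2 u ⟨u, hu, le_self_add⟩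
  exact ⟨i, hi⟩

lemma exists_wit {σ : Type*} (P : Set (σ →₀ ℕ)) (f : MvPolynomial σ K) (e : ℕ)
    (hf : f.IsHomogeneous e)
    (hp : ((Ideal.span (mon K '' P)).colon (Ideal.span {f})).IsPrime) :
    ∃ B m, m.degree = e ∧ Wit P B m := by
  classical
  set Q := Ideal.span (mon K '' P) with hQ
  set p := Q.colon (Ideal.span {f}) with hpd
  have h1 : f.support.inf (fun m => Q.colon (Ideal.span {mon K m})) ≤ p := by
    intro g hg
    rw [hpd, Ideal.mem_colon_span_singleton]
    rw [Submodule.mem_finsetInf] at hg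
    rw [← support_sum_monomial_coeff f, Finset.mul_sum]
    refine Ideal.sum_mem _ fun m hm => ?_
    have := Ideal.mem_colon_span_singleton.1 (hg m hm)
    have e1 : g * monomial m (coeff m f) = C (coeff m f) * (g * mon K m) := by
      rw [mul_left_comm, mon, C_mul_monomial, mul_one]
    rw [e1]
    exact Ideal.mul_mem_left _ _ this
  obtain ⟨m, hm, hmp⟩ := (Ideal.IsPrime.inf_le' hp).1 h1
  refine ⟨{i | X i ∈ p}, m, ?_, ?_, ?_⟩
  · by_contra hne
    exact (mem_support_iff.1 hm) (hf.coeff_eq_zero hne)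
  · intro i hi
    have := Ideal.mem_colon_span_singleton.1 (show X i ∈ p from hi)
    refine (mem_span_mon_s7 K P _).1 this _ ?_
    rw [mem_support_iff, add_comm, coeff_X_mul]
    exact mem_support_iff.1 hm
  · intro w hw
    have h2 : mon K w ∈ p := by
      apply hmp
      rw [Ideal.mem_colon_span_singleton, mon_mul, hQ, mon_mem_span]
      exact hw
    rw [mon, monomial_eq, C_1, one_mul, Finsupp.prod, hp.prod_mem_iff] at h2
    obtain ⟨i, hi, h3⟩ := h2
    exact ⟨i, hp.mem_of_pow_mem _ h3, by simpa using hi⟩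

lemma Wit.colon_eq {σ : Type*} {P : Set (σ →₀ ℕ)} {B : Set σ} {m : σ →₀ ℕ} (h : Wit P B m) :
    (Ideal.span (mon K '' P)).colon (Ideal.span {mon K m}) =
      Ideal.span ((fun i => (X i : MvPolynomial σ K)) '' B) := by
  apply le_antisymm
  · intro g hg
    rw [Ideal.mem_colon_span_singleton, mem_span_mon_s7] at hg
    have : ∀ w ∈ g.support, ∃ i ∈ B, w i ≠ 0 := by
      intro w hw
      refine h.2 w (hg _ ?_)
      rw [mem_support_iff, mon, coeff_mul_monomial, mul_one]
      exact mem_support_iff.1 hw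
    exact mem_ideal_span_X_image.2 this
  · rw [Ideal.span_le]
    rintro _ ⟨i, hi, rfl⟩
    rw [SetLike.mem_coe, Ideal.mem_colon_span_singleton]
    have : (X i : MvPolynomial σ K) = mon K (Finsupp.single i 1) := rfl
    simp only [this]
    rw [mon_mul, mon_mem_span, add_comm]
    exact h.1 i hi

lemma vNumber_le {σ : Type*} (Q : Ideal (MvPolynomial σ K)) (m : σ →₀ ℕ) (B : Set σ)
    (h : Q.colon (Ideal.span {mon K m}) = Ideal.span ((fun i => (X i : MvPolynomial σ K)) '' B)) :
    m.degree ∈ {d | ∃ f : MvPolynomial σ K, f.IsHomogeneous d ∧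
    Q.colon (Ideal.span {f}) ∈ assPrimes K Q} :=
  ⟨mon K m, isHomogeneous_monomial _ rfl,
    colonPrime_mem_ass K Q _ (h ▸ isPrime_span_vars K B)⟩

lemma eq_of_le_degree {σ : Type*} {a b : σ →₀ ℕ} (h : a ≤ b) (hd : a.degree = b.degree) :
    a = b := by
  obtain ⟨c, rfl⟩ := exists_add_of_le h
  rw [map_add] at hd
  have : c.degree = 0 := by omega
  rw [Finsupp.degree_eq_zero_iff] at this
  simp [this]

lemma degree_le_of_le {σ : Type*} {a b : σ →₀ ℕ} (h : a ≤ b) : a.degree ≤ b.degree := by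
  obtain ⟨c, rfl⟩ := exists_add_of_le h
  simp

/-- the exponent of a product of generators -/
def prodExp {σ : Type*} (U : Finset (σ →₀ ℕ)) (c : U → ℕ) : σ →₀ ℕ := ∑ u, c u • (u : σ →₀ ℕ)

lemma prodExp_add {σ : Type*} (U : Finset (σ →₀ ℕ)) (c c' : U → ℕ) :
    prodExp U (c + c') = prodExp U c + prodExp U c' := by
  simp [prodExp, add_smul, Finset.sum_add_distrib]

lemma prodExp_single {σ : Type*} [DecidableEq σ] (U : Finset (σ →₀ ℕ)) (u : U) :
    prodExp U (Pi.single u 1) = u := by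
  simp [prodExp, Pi.single_apply, ite_smul]

/-- exponents of `k`-fold products -/
def PP {σ : Type*} (U : Finset (σ →₀ ℕ)) (k : ℕ) : Set (σ →₀ ℕ) :=
  {a | ∃ c : U → ℕ, ∑ u, c u = k ∧ prodExp U c = a}

lemma PP_add {σ : Type*} {U : Finset (σ →₀ ℕ)} {k l : ℕ} {a b : σ →₀ ℕ}
    (ha : a ∈ PP U k) (hb : b ∈ PP U l) : a + b ∈ PP U (k + l) := by
  obtain ⟨c, rfl, rfl⟩ := ha
  obtain ⟨c', rfl, rfl⟩ := hb
  exact ⟨c + c', by simp [Finset.sum_add_distrib], prodExp_add _ _ _⟩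

lemma PP_one {σ : Type*} [DecidableEq σ] {U : Finset (σ →₀ ℕ)} {u : σ →₀ ℕ} (hu : u ∈ U) :
    u ∈ PP U 1 :=
  ⟨Pi.single ⟨u, hu⟩ 1, by simp, prodExp_single U ⟨u, hu⟩⟩

lemma PP_degree {σ : Type*} {U : Finset (σ →₀ ℕ)} {d k : ℕ} (hd : ∀ m ∈ U, m.degree = d)
    {a : σ →₀ ℕ} (ha : a ∈ PP U k) : a.degree = d * k := by
  obtain ⟨c, rfl, rfl⟩ := ha
  rw [prodExp, map_sum, Finset.mul_sum]
  refine Finset.sum_congr rfl fun u _ => ?_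
  rw [map_nsmul, hd u u.2, smul_eq_mul, mul_comm]

lemma PP_nonempty {σ : Type*} [DecidableEq σ] {U : Finset (σ →₀ ℕ)} (hU : U.Nonempty) (k : ℕ) :
    (PP U k).Nonempty := by
  obtain ⟨u, hu⟩ := hU
  exact ⟨_, Pi.single ⟨u, hu⟩ k, by simp, rfl⟩

lemma sub_single {ι : Type*} [DecidableEq ι] (c c0 : ι → ℕ) (h : c0 ≤ c) (u : ι)
    (hu : c0 u < c u) : ∃ e : ι → ℕ, c = c0 + e + Pi.single u 1 := by
  refine ⟨fun v => c v - c0 v - (Pi.single u 1 : ι → ℕ) v, ?_⟩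
  ext v
  have : c0 v ≤ c v := h v
  by_cases hv : v = u
  · subst hv; simp; omega
  · simp [hv]; omega

lemma pow_eq_span {σ : Type*} [DecidableEq σ] (I : Ideal (MvPolynomial σ K))
    (U : Finset (σ →₀ ℕ)) (hI : I = Ideal.span (mon K '' (U : Set (σ →₀ ℕ)))) (k : ℕ) :
    I ^ k = Ideal.span (mon K '' PP U k) := by
  induction k with
  | zero =>
    rw [pow_zero, Ideal.one_eq_top, eq_comm, Ideal.eq_top_iff_one]
    exact Ideal.subset_span ⟨0, ⟨0, by simp, by simp [prodExp]⟩, by simp [mon]⟩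
  | succ k ih =>
    rw [pow_succ, ih, hI, Ideal.span_mul_span']
    congr 1
    ext g
    constructor
    · rintro ⟨_, ⟨a, ha, rfl⟩, _, ⟨u, hu, rfl⟩, rfl⟩
      exact ⟨a + u, PP_add ha (PP_one hu), (mon_mul K a u).symm⟩
    · rintro ⟨_, ⟨c, hc, rfl⟩, rfl⟩
      obtain ⟨u, -, hu⟩ : ∃ u ∈ Finset.univ, 0 < c u := by
        by_contra! hcon
        have : ∑ u, c u = 0 := Finset.sum_eq_zero fun u hu => Nat.le_zero.1 (hcon u hu)
        omega
      obtain ⟨e, he⟩ := sub_single c 0 (fun _ => Nat.zero_le _) u hu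
      rw [zero_add] at he
      subst he
      refine ⟨_, ⟨prodExp U e, ⟨e, ?_, rfl⟩, rfl⟩, _, ⟨(u : σ →₀ ℕ), u.2, rfl⟩, ?_⟩
      · simpa [Finset.sum_add_distrib] using hc
      · show mon K _ * mon K _ = _
        rw [mon_mul, prodExp_add, prodExp_single]

lemma wit_step {σ : Type*} [DecidableEq σ] (U : Finset (σ →₀ ℕ)) (d : ℕ)
    (hd : ∀ m ∈ U, m.degree = d) (hU : U.Nonempty) (B : Set σ) :
    ∃ k0, ∀ k ≥ k0, (∃ f : σ →₀ ℕ, f.degree + 1 = d * (k + 1) ∧ Wit (PP U (k + 1)) B f) →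
      ∃ f : σ →₀ ℕ, f.degree + 1 = d * k ∧ Wit (PP U k) B f := by
  rcases B.eq_empty_or_nonempty with rfl | ⟨i, hi⟩
  · refine ⟨0, fun k _ ⟨f, _, hf⟩ => ?_⟩
    exact absurd (hf.nonempty (PP_nonempty hU _)) (by simp)
  let N : ℕ → (σ →₀ ℕ) → Prop := fun k f => ∀ j ∈ B, f + Finsupp.single j 1 ∈ PP U k
  let S : Set (U → ℕ) := {c | ∃ f, N (∑ u, c u) f ∧ f + Finsupp.single i 1 = prodExp U c}
  have hfin : {c | Minimal (· ∈ S) c}.Finite :=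
    WellQuasiOrderedLE.finite_of_isAntichain (setOfPred_minimal_antichain _)
  obtain ⟨k0, hk0⟩ := (hfin.image (fun c => ∑ u, c u)).bddAbove
  refine ⟨k0, fun k hk ⟨f, hfd, hf⟩ => ?_⟩
  have hN : N (k + 1) f := by
    intro j hj
    obtain ⟨u, hu, hle⟩ := hf.1 j hj
    have : u = f + Finsupp.single j 1 := by
      apply eq_of_le_degree hle
      rw [PP_degree hd hu, map_add, Finsupp.degree_single, hfd]
    rwa [← this]
  obtain ⟨c, hc, hce⟩ := hN i hi
  have hcS : c ∈ S := ⟨f, hc ▸ hN, hce.symm⟩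
  obtain ⟨c0, hc0, hmin⟩ := exists_minimal_le_of_wellFoundedLT (· ∈ S) c hcS
  have hb : ∑ u, c0 u ≤ k0 := hk0 ⟨c0, hmin, rfl⟩
  obtain ⟨u, -, hu⟩ : ∃ u ∈ Finset.univ, c0 u < c u := by
    apply Finset.exists_lt_of_sum_lt
    omega
  obtain ⟨e, he⟩ := sub_single c c0 hc0 u hu
  obtain ⟨f0, hf0, hf0e⟩ := hmin.1
  have hk' : k = ∑ u, c0 u + ∑ u, e u := by
    have : ∑ u, c u = ∑ u, c0 u + ∑ u, e u + 1 := by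
      rw [he]; simp [Finset.sum_add_distrib]
    omega
  have hff : f = f0 + prodExp U e + u := by
    apply add_right_cancel (b := Finsupp.single i 1)
    rw [← hce, he, prodExp_add, prodExp_add, prodExp_single, ← hf0e]
    abel
  have hN' : N k (f0 + prodExp U e) := by
    intro j hj
    rw [hk', add_right_comm]
    exact PP_add (hf0 j hj) ⟨e, rfl, rfl⟩
  refine ⟨f0 + prodExp U e, ?_, fun j hj => ⟨_, hN' j hj, le_rfl⟩, ?_⟩
  · have := PP_degree hd (hN' i hi)
    rwa [map_add, Finsupp.degree_single] at this
  · rintro w ⟨v, hv, hle⟩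
    apply hf.2
    refine ⟨v + u, PP_add hv (PP_one u.2), ?_⟩
    rw [hff, ← add_assoc]
    gcongr

lemma eventually_const (p : ℕ → Prop) (h : ∃ k0, ∀ k ≥ k0, p (k + 1) → p k) :
    (∃ N, ∀ k ≥ N, p k) ∨ ∃ N, ∀ k ≥ N, ¬ p k := by
  obtain ⟨k0, h⟩ := h
  by_cases hx : ∃ N ≥ k0, ¬ p N
  · obtain ⟨N, hN, hp⟩ := hx
    right
    refine ⟨N, fun k hk => ?_⟩
    induction k, hk using Nat.le_induction with
    | base => exact hp
    | succ k hk ih => exact fun h' => ih (h k (hN.trans hk) h')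
  · push Not at hx
    exact Or.inl ⟨k0, hx⟩

lemma eventually_const_exists {β : Type*} [Finite β] (p : β → ℕ → Prop)
    (h : ∀ b, ∃ k0, ∀ k ≥ k0, p b (k + 1) → p b k) :
    (∃ N, ∀ k ≥ N, ∃ b, p b k) ∨ ∃ N, ∀ k ≥ N, ∀ b, ¬ p b k := by
  by_cases hx : ∃ b N, ∀ k ≥ N, p b k
  · obtain ⟨b, N, hN⟩ := hx
    exact Or.inl ⟨N, fun k hk => ⟨b, hN k hk⟩⟩
  · right
    push Not at hx
    have : ∀ b, ∃ N, ∀ k ≥ N, ¬ p b k := by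
      intro b
      rcases eventually_const (p b) (h b) with ⟨N, hN⟩ | h'
      · obtain ⟨k, hk, hn⟩ := hx b N
        exact absurd (hN k hk) hn
      · exact h'
    choose N hN using this
    obtain ⟨M, hM⟩ := (Set.finite_range N).bddAbove
    exact ⟨M, fun k hk b => hN b k ((hM ⟨b, rfl⟩).trans hk)⟩

lemma initialDegree_eq {σ : Type*} (U : Finset (σ →₀ ℕ)) (d : ℕ)
    (hd : ∀ m ∈ U, m.degree = d) (hU : U.Nonempty) :
    initialDegree K (Ideal.span (mon K '' (U : Set (σ →₀ ℕ)))) = d := by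
  obtain ⟨u, hu⟩ := hU
  apply le_antisymm
  · apply Nat.sInf_le
    exact ⟨mon K u, Ideal.subset_span ⟨u, hu, rfl⟩, by simp [mon],
      isHomogeneous_monomial _ (hd u hu)⟩
  · apply le_csInf
    · exact ⟨d, mon K u, Ideal.subset_span ⟨u, hu, rfl⟩, by simp [mon],
        isHomogeneous_monomial _ (hd u hu)⟩
    · rintro e ⟨f, hfI, hf0, hfe⟩
      obtain ⟨a, ha⟩ := support_nonempty.2 hf0
      obtain ⟨v, hv, hle⟩ := (mem_span_mon_s7 K _ _).1 hfI a ha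
      have h1 : a.degree = e := by
        by_contra hne
        exact (mem_support_iff.1 ha) (hfe.coeff_eq_zero hne)
      rw [← h1, ← hd v hv]
      exact degree_le_of_le hle

/-- minimal generators of an equigenerated monomial ideal have the right degree -/
lemma minGens_degree {σ : Type*} [DecidableEq σ] (P : Set (σ →₀ ℕ)) (D : ℕ)
    (hP : ∀ a ∈ P, a.degree = D) (V : Finset (σ →₀ ℕ))
    (hV : MinimalGens K (Ideal.span (mon K '' P)) V) : ∀ m ∈ V, m.degree = D := by
  intro m hm
  have h1 : mon K m ∈ Ideal.span (mon K '' P) := by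
    rw [hV.1]; exact Ideal.subset_span ⟨m, hm, rfl⟩
  obtain ⟨u, hu, hum⟩ := (mon_mem_span K _ _).1 h1
  have h2 : mon K u ∈ Ideal.span (mon K '' (V : Set (σ →₀ ℕ))) := by
    rw [← hV.1]; exact Ideal.subset_span ⟨u, hu, rfl⟩
  obtain ⟨v, hv, hvu⟩ := (mon_mem_span K _ _).1 h2
  have hvm : v = m := by
    by_contra hne
    apply hV.2 m hm
    rw [mon_mem_span]
    exact ⟨v, by simpa [hne] using hv, hvu.trans hum⟩
  subst hvm
  rw [le_antisymm hvu hum, hP u hu]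

lemma exists_degree_pred {σ : Type*} (u : σ →₀ ℕ) (D : ℕ) (h : u.degree = D) (hD : 1 ≤ D) :
    ∃ (f : σ →₀ ℕ) (i : σ), f + Finsupp.single i 1 = u := by
  have hne : u ≠ 0 := by
    rintro rfl
    simp at h; omega
  obtain ⟨i, hi⟩ := Finsupp.ne_iff.1 hne
  refine ⟨u - Finsupp.single i 1, i, tsub_add_cancel_of_le ?_⟩
  rw [Finsupp.single_le_iff]
  simp at hi; omega

/-- Assuming the monomial Simon conjecture, for an equigenerated monomial ideal `I` all of
whose powers have linear quotients, either `v(I^k) = α(I)·k - 1` for all `k ≫ 0` or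
`v(I^k) = α(I)·k` for all `k ≫ 0`. -/
theorem stmt7 {n : ℕ}
    (hSimon : ∀ (d : ℕ) (J : Ideal (MvPolynomial (Fin n) K)) (V : Finset (Fin n →₀ ℕ)),
      MinimalGens K J V → (∀ m ∈ V, mdeg m = d) → HasLinearQuotients K J →
      ExtendsByLinQuots K J ({m : Fin n →₀ ℕ | mdeg m = d} \ (V : Set (Fin n →₀ ℕ))))
    (I : Ideal (MvPolynomial (Fin n) K)) (U : Finset (Fin n →₀ ℕ)) (d : ℕ)
    (hU : MinimalGens K I U) (hd : ∀ m ∈ U, mdeg m = d)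
    (hlq : ∀ k : ℕ, 1 ≤ k → HasLinearQuotients K (I ^ k)) :
    (∃ N : ℕ, ∀ k : ℕ, N ≤ k → vNumber K (I ^ k) = initialDegree K I * k - 1) ∨
    (∃ N : ℕ, ∀ k : ℕ, N ≤ k → vNumber K (I ^ k) = initialDegree K I * k) := by
  classical
  have hd' : ∀ m ∈ U, m.degree = d := hd
  have hI := hU.1
  rcases U.eq_empty_or_nonempty with hUe | hUne
  · left
    have hI0 : I = ⊥ := by rw [hI, hUe]; simp
    refine ⟨1, fun k hk => ?_⟩
    have h0 : I ^ k = ⊥ := by rw [hI0, ← Ideal.zero_eq_bot, zero_pow (by omega)]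
    have h1 : initialDegree K I = 0 := by
      rw [hI0, initialDegree]
      convert Nat.sInf_empty
      ext e
      simp only [Set.mem_ofPred_eq, Set.mem_empty_iff_false, iff_false]
      rintro ⟨f, hf, hf0, -⟩
      exact hf0 (by simpa using hf)
    rw [h0, h1]
    have h2 : (⊥ : Ideal (MvPolynomial (Fin n) K)).colon (Ideal.span {mon K (0 : Fin n →₀ ℕ)}) =
        Ideal.span ((fun i => (X i : MvPolynomial (Fin n) K)) '' ∅) := by
      ext g
      rw [Ideal.mem_colon_span_singleton]
      simp [mon]
    have := Nat.sInf_le (vNumber_le K ⊥ 0 ∅ h2)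
    simpa [vNumber] using this
  have hini : initialDegree K I = d := by rw [hI]; exact initialDegree_eq K U d hd' hUne
  rw [hini]
  rcases Nat.eq_zero_or_pos d with hd0 | hdpos
  · left
    refine ⟨0, fun k _ => ?_⟩
    obtain ⟨u, hu⟩ := hUne
    have hu0 : u = 0 := by
      rw [← Finsupp.degree_eq_zero_iff, hd' u hu, hd0]
    have hI1 : I = ⊤ := by
      rw [hI, Ideal.eq_top_iff_one]
      exact Ideal.subset_span ⟨u, hu, by simp [hu0, mon]⟩
    rw [hd0, hI1, Ideal.top_pow, vNumber]
    have : {d | ∃ f : MvPolynomial (Fin n) K, f.IsHomogeneous d ∧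
        (⊤ : Ideal (MvPolynomial (Fin n) K)).colon (Ideal.span {f}) ∈ assPrimes K ⊤} = ∅ := by
      ext e
      simp only [Set.mem_ofPred_eq, Set.mem_empty_iff_false, iff_false]
      rintro ⟨f, -, hf⟩
      exact hf.1.ne_top (by simp)
    rw [this]
    simp
  have hpow := pow_eq_span K I U hI
  have hlow : ∀ k e, (∃ f : MvPolynomial (Fin n) K, f.IsHomogeneous e ∧
      (I ^ k).colon (Ideal.span {f}) ∈ assPrimes K (I ^ k)) →
      ∃ B m, m.degree = e ∧ Wit (PP U k) B m ∧ d * k ≤ e + 1 := by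
    rintro k e ⟨f, hf, hp⟩
    have hp := hp.1
    rw [hpow] at hp
    obtain ⟨B, m, hm, hw⟩ := exists_wit K _ f e hf hp
    refine ⟨B, m, hm, hw, ?_⟩
    obtain ⟨i, hi⟩ := hw.nonempty (PP_nonempty hUne k)
    obtain ⟨u, hu, hle⟩ := hw.1 i hi
    have := degree_le_of_le hle
    rwa [PP_degree hd' hu, map_add, Finsupp.degree_single, hm] at this
  have hwit : ∀ k B m, Wit (PP U k) B m → m.degree ∈ {d | ∃ f : MvPolynomial (Fin n) K,
      f.IsHomogeneous d ∧ (I ^ k).colon (Ideal.span {f}) ∈ assPrimes K (I ^ k)} := by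
    intro k B m hw
    apply vNumber_le K (I ^ k) m B
    rw [hpow]
    exact hw.colon_eq K
  have hup : ∀ k, 1 ≤ k → (d * k ∈ {d | ∃ f : MvPolynomial (Fin n) K,
      f.IsHomogeneous d ∧ (I ^ k).colon (Ideal.span {f}) ∈ assPrimes K (I ^ k)}) ∨
      ∃ B m, m.degree + 1 = d * k ∧ Wit (PP U k) B m := by
    intro k hk
    obtain ⟨L, hLn, hLm, hLq⟩ := hlq k hk
    have hLd : ∀ m ∈ L.toFinset, mdeg m = d * k := by
      rw [hpow] at hLm
      exact minGens_degree K _ (d * k) (fun a ha => PP_degree hd' ha) _ hLm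
    obtain ⟨L', -, hL's, hL'⟩ := hSimon (d * k) (I ^ k) L.toFinset hLm hLd ⟨L, hLn, hLm, hLq⟩
    rcases L' with _ | ⟨v, L'⟩
    · right
      have hall : ∀ m : Fin n →₀ ℕ, m.degree = d * k → UpCl (PP U k) m := by
        intro m hm
        have hmL : m ∈ L.toFinset := by
          by_contra hne
          have : m ∈ ({m : Fin n →₀ ℕ | mdeg m = d * k} \ (L.toFinset : Set (Fin n →₀ ℕ))) :=
            ⟨hm, hne⟩
          rw [← hL's] at this
          simp at this
        rw [← mon_mem_span K, ← hpow, hLm.1]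
        exact Ideal.subset_span ⟨m, hmL, rfl⟩
      obtain ⟨u, hu⟩ := PP_nonempty hUne k
      obtain ⟨f, i, hfi⟩ := exists_degree_pred u (d * k) (PP_degree hd' hu)
        (Nat.mul_pos hdpos hk)
      have hfd : f.degree + 1 = d * k := by
        have := PP_degree hd' hu
        rwa [← hfi, map_add, Finsupp.degree_single] at this
      refine ⟨Set.univ, f, hfd, fun j _ => hall _ ?_, ?_⟩
      · rw [map_add, Finsupp.degree_single, hfd]
      · rintro w ⟨v, hv, hle⟩
        by_contra! hcon
        have hw0 : w = 0 := Finsupp.ext fun j => hcon j trivial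
        have := degree_le_of_le hle
        rw [hw0, zero_add, PP_degree hd' hv] at this
        omega
    · left
      obtain ⟨B, hB⟩ := hL' 0 (by simp)
      have hv : mdeg v = d * k := by
        have : v ∈ {m | m ∈ v :: L'} := by simp
        rw [hL's] at this
        exact this.1
      have hB' : (I ^ k).colon (Ideal.span {mon K v}) =
          Ideal.span ((fun i => (X i : MvPolynomial (Fin n) K)) '' B) := by
        simpa using hB
      have := vNumber_le K (I ^ k) v B hB'
      rwa [show v.degree = d * k from hv] at this
  rcases eventually_const_exists
    (fun (B : Set (Fin n)) k => ∃ f : Fin n →₀ ℕ, f.degree + 1 = d * k ∧ Wit (PP U k) B f)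
    (fun B => wit_step U d hd' hUne B) with ⟨N, hN⟩ | ⟨N, hN⟩
  · left
    refine ⟨N, fun k hk => ?_⟩
    obtain ⟨B, f, hfd, hf⟩ := hN k hk
    have hmem := hwit k B f hf
    apply le_antisymm
    · have := Nat.sInf_le hmem
      rw [vNumber]; omega
    · apply le_csInf ⟨_, hmem⟩
      intro e he
      obtain ⟨-, -, -, -, h⟩ := hlow k e he
      omega
  · right
    refine ⟨N + 1, fun k hk => ?_⟩
    have hno := hN k (by omega)
    rcases hup k (by omega) with hmem | ⟨B, m, hm, hw⟩
    · apply le_antisymm (Nat.sInf_le hmem)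
      apply le_csInf ⟨_, hmem⟩
      intro e he
      obtain ⟨B, m, hm, hw, h⟩ := hlow k e he
      by_contra hlt
      exact hno B ⟨m, by omega, hw⟩
    · exact absurd ⟨m, hm, hw⟩ (hno B)

end
end

section
/- Let I ⊂ S be a monomial ideal with linear powers (i.e., I^k has a linear resolution for all k ≥ 1) such that depth S/I = 0. Then v(I^k) = α(I)·k − 1 for all k ≥ 1. -/
open MvPolynomial

noncomputable section

variable (K : Type*) [Field K]

/-- `I` has a `d`-linear (free) resolution: there is a free resolution
`⋯ → F_1 → F_0 → I → 0` in which `F_0` has a basis mapping to homogeneous generators of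
degree `d` and all the syzygy matrices consist of homogeneous linear forms (so `F_i` is
generated in degree `d + i`).  This happens iff the minimal graded free resolution of `I`
is linear, i.e. `β_{i,j}(I) = 0` for `j ≠ i + d`. -/
def HasLinearResolution {σ : Type*} (I : Ideal (MvPolynomial σ K)) (d : ℕ) : Prop :=
  ∃ (b : ℕ → ℕ) (g : Fin (b 0) → MvPolynomial σ K)
    (M : ∀ i : ℕ, Matrix (Fin (b i)) (Fin (b (i + 1))) (MvPolynomial σ K)),
    (∀ j, (g j).IsHomogeneous d) ∧
    Ideal.span (Set.range g) = I ∧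
    (∀ i j l, ((M i) j l).IsHomogeneous 1) ∧
    (∀ v : Fin (b 0) → MvPolynomial σ K,
      (∑ j, v j * g j) = 0 ↔ ∃ w, (M 0).mulVec w = v) ∧
    (∀ (i : ℕ) (v : Fin (b (i + 1)) → MvPolynomial σ K),
      (M i).mulVec v = 0 ↔ ∃ w, (M (i + 1)).mulVec w = v)

/-- vectors with all entries in `J` -/
def VJ {R : Type*} [CommRing R] (J : Ideal R) (m : ℕ) : Submodule R (Fin m → R) :=
  Submodule.pi Set.univ (fun _ => J)

theorem mem_VJ {R : Type*} [CommRing R] {J : Ideal R} {m : ℕ} {v : Fin m → R} :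
    v ∈ VJ J m ↔ ∀ j, v j ∈ J := by
  simp [VJ, Submodule.mem_pi]

theorem VJ_mulVec {R : Type*} [CommRing R] {J : Ideal R} {m l : ℕ}
    (M : Matrix (Fin l) (Fin m) R) {v : Fin m → R} (hv : v ∈ VJ J m) : M.mulVec v ∈ VJ J l := by
  rw [mem_VJ] at *
  intro j
  simp only [Matrix.mulVec, dotProduct]
  exact Ideal.sum_mem _ fun i _ => J.mul_mem_left _ (hv i)

theorem VJ_sup {R : Type*} [CommRing R] {J : Ideal R} {x : R} {m : ℕ} {v : Fin m → R} :
    v ∈ VJ (J ⊔ Ideal.span {x}) m ↔ ∃ w, v - x • w ∈ VJ J m := by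
  constructor
  · intro h
    rw [mem_VJ] at h
    have : ∀ j, ∃ w, v j - x * w ∈ J := by
      intro j
      obtain ⟨a, ha, c, hc, hac⟩ := Submodule.mem_sup.1 (h j)
      obtain ⟨t, rfl⟩ := Ideal.mem_span_singleton'.1 hc
      refine ⟨t, ?_⟩
      rw [← hac]
      convert ha using 1
      ring
    choose w hw using this
    exact ⟨w, mem_VJ.2 fun j => by simpa using hw j⟩
  · rintro ⟨w, hw⟩
    rw [mem_VJ] at *
    intro j
    have h1 := hw j
    have h2 : v j = (v - x • w) j + x * w j := by simp
    rw [h2]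
    exact Ideal.add_mem _ (Ideal.mem_sup_left h1)
      (Ideal.mem_sup_right (Ideal.mul_mem_right _ _ (Ideal.mem_span_singleton_self x)))

theorem VJ_reg {R : Type*} [CommRing R] {J : Ideal R} {x : R} (hx : ∀ p, x * p ∈ J → p ∈ J)
    {m : ℕ} {v : Fin m → R} (h : x • v ∈ VJ J m) : v ∈ VJ J m := by
  rw [mem_VJ] at *
  exact fun j => hx _ (h j)

theorem exact_step {R : Type*} [CommRing R] {J : Ideal R} {x : R}
    (hx : ∀ p, x * p ∈ J → p ∈ J) {b : ℕ → ℕ}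
    (M : ∀ i : ℕ, Matrix (Fin (b i)) (Fin (b (i + 1))) R)
    (hMM : ∀ i v, (M i).mulVec ((M (i + 1)).mulVec v) = 0) (i : ℕ)
    (h0 : ∀ v, (M i).mulVec v ∈ VJ J (b i) → ∃ w, v - (M (i + 1)).mulVec w ∈ VJ J (b (i + 1)))
    (h1 : ∀ v, (M (i + 1)).mulVec v ∈ VJ J (b (i + 1)) →
      ∃ w, v - (M (i + 2)).mulVec w ∈ VJ J (b (i + 2)))
    (v) (hv : (M (i + 1)).mulVec v ∈ VJ (J ⊔ Ideal.span {x}) (b (i + 1))) :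
    ∃ w, v - (M (i + 2)).mulVec w ∈ VJ (J ⊔ Ideal.span {x}) (b (i + 2)) := by
  obtain ⟨w, hw⟩ := VJ_sup.1 hv
  have h2 := VJ_mulVec (M i) hw
  rw [Matrix.mulVec_sub, hMM, Matrix.mulVec_smul, zero_sub, neg_mem_iff] at h2
  obtain ⟨u, hu⟩ := h0 w (VJ_reg hx h2)
  have h3 : (M (i + 1)).mulVec (v - x • u) ∈ VJ J (b (i + 1)) := by
    rw [Matrix.mulVec_sub, Matrix.mulVec_smul]
    convert Submodule.add_mem _ hw ((VJ J _).smul_mem x hu) using 1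
    rw [smul_sub]; abel
  obtain ⟨t, ht⟩ := h1 _ h3
  refine ⟨t, VJ_sup.2 ⟨u, ?_⟩⟩
  convert ht using 1
  abel

theorem socle_step {R : Type*} [CommRing R] {J : Ideal R} {x : R}
    (hx : ∀ p, x * p ∈ J → p ∈ J) {b : ℕ → ℕ}
    (M : ∀ i : ℕ, Matrix (Fin (b i)) (Fin (b (i + 1))) R)
    (hMM : ∀ i v, (M i).mulVec ((M (i + 1)).mulVec v) = 0) (r : ℕ)
    (h0 : ∀ v, (M r).mulVec v ∈ VJ J (b r) → ∃ w, v - (M (r + 1)).mulVec w ∈ VJ J (b (r + 1)))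
    (v) (hv : ∀ w, v - (M r).mulVec w ∉ VJ J (b r)) (u)
    (hu : x • v - (M r).mulVec u ∈ VJ J (b r)) :
    (∀ w, u - (M (r + 1)).mulVec w ∉ VJ (J ⊔ Ideal.span {x}) (b (r + 1))) ∧
    ∀ y : R, (∃ w, y • v - (M r).mulVec w ∈ VJ J (b r)) →
      ∃ w, y • u - (M (r + 1)).mulVec w ∈ VJ (J ⊔ Ideal.span {x}) (b (r + 1)) := by
  constructor
  · intro w hw
    obtain ⟨t, ht⟩ := VJ_sup.1 hw
    have h2 := VJ_mulVec (M r) ht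
    rw [Matrix.mulVec_sub, Matrix.mulVec_sub, hMM, Matrix.mulVec_smul, sub_zero] at h2
    refine hv t (VJ_reg hx ?_)
    convert Submodule.add_mem _ hu h2 using 1
    rw [smul_sub]; abel
  · rintro y ⟨w, hw⟩
    have h3 : (M r).mulVec (y • u - x • w) ∈ VJ J (b r) := by
      rw [Matrix.mulVec_sub, Matrix.mulVec_smul, Matrix.mulVec_smul]
      convert Submodule.sub_mem _ ((VJ J _).smul_mem x hw) ((VJ J _).smul_mem y hu) using 1
      rw [smul_sub, smul_sub, smul_comm x y]; abel
    obtain ⟨t, ht⟩ := h0 _ h3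
    refine ⟨t, VJ_sup.2 ⟨w, ?_⟩⟩
    convert ht using 1
    abel

/-- the ideal of the first `r` variables -/
def JJ (k : Type*) [Field k] (n r : ℕ) : Ideal (MvPolynomial (Fin n) k) :=
  Ideal.span (X '' {i : Fin n | i.val < r})

theorem JJ_zero (k : Type*) [Field k] (n : ℕ) : JJ k n 0 = ⊥ := by
  simp [JJ]

theorem JJ_succ (k : Type*) [Field k] (n r : ℕ) (hr : r < n) :
    JJ k n (r + 1) = JJ k n r ⊔ Ideal.span {X ⟨r, hr⟩} := by
  have : {i : Fin n | i.val < r + 1} = {i : Fin n | i.val < r} ∪ {⟨r, hr⟩} := by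
    ext i
    simp [Fin.ext_iff]
    omega
  rw [JJ, this, Set.image_union, Ideal.span_union, Set.image_singleton, JJ]

theorem JJ_top (k : Type*) [Field k] (n : ℕ) :
    JJ k n n = Ideal.span (Set.range X) := by
  rw [JJ, ← Set.image_univ]
  congr 2
  ext i; simp

theorem JJ_reg (k : Type*) [Field k] (n r : ℕ) (hr : r < n) (p : MvPolynomial (Fin n) k)
    (h : X ⟨r, hr⟩ * p ∈ JJ k n r) : p ∈ JJ k n r := by
  rw [JJ, mem_ideal_span_X_image] at *
  intro m hm
  obtain ⟨i, hi, h1⟩ := h (Finsupp.single ⟨r, hr⟩ 1 + m) (by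
    rw [mem_support_iff] at *
    rwa [coeff_X_mul])
  refine ⟨i, hi, ?_⟩
  have : (⟨r, hr⟩ : Fin n) ≠ i := by
    rintro rfl
    simp at hi
  simpa [Finsupp.single_apply, this] using h1

theorem JJ_comp (k : Type*) [Field k] (n r c : ℕ) (p : MvPolynomial (Fin n) k)
    (h : p ∈ JJ k n r) : homogeneousComponent c p ∈ JJ k n r := by
  classical
  rw [JJ, mem_ideal_span_X_image] at *
  intro m hm
  rw [support_homogeneousComponent] at hm
  exact h m (Finset.mem_of_mem_filter _ hm)

theorem comp_mul {k σ : Type*} [Field k] {q : MvPolynomial σ k} {a : ℕ}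
    (hq : q.IsHomogeneous a) (c : ℕ) (p : MvPolynomial σ k) :
    homogeneousComponent (a + c) (q * p) = q * homogeneousComponent c p := by
  let _ := MvPolynomial.gradedAlgebra (σ := σ) (R := k)
  have h := DirectSum.coe_decompose_mul_add_of_left_mem (homogeneousSubmodule σ k) (b := p)
    (i := a) (j := c) hq
  have h1 : ∀ i (φ : MvPolynomial σ k),
      ((DirectSum.decompose (homogeneousSubmodule σ k) φ) i : MvPolynomial σ k) =
      homogeneousComponent i φ := fun i φ => decomposition.decompose'_apply φ i
  rwa [h1, h1] at h

theorem hdeg {k σ : Type*} [Field k] {f : MvPolynomial σ k} {e : ℕ}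
    (hf : f.IsHomogeneous e) {m : σ →₀ ℕ} (hm : m ∈ f.support) : m.degree = e := by
  by_contra h
  exact (mem_support_iff.1 hm) (hf.coeff_eq_zero h)

theorem socle_main {k : Type*} [Field k] {n : ℕ} {b : ℕ → ℕ}
    (M : ∀ i : ℕ, Matrix (Fin (b i)) (Fin (b (i + 1))) (MvPolynomial (Fin n) k))
    (a c : ℕ → ℕ) (hM : ∀ i j l, (M i j l).IsHomogeneous (a i))
    (hac : ∀ i, a i + c (i + 1) = 1 + c i)
    (hex : ∀ i v, (M i).mulVec v = 0 ↔ ∃ w, (M (i + 1)).mulVec w = v)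
    (v : Fin (b 0) → MvPolynomial (Fin n) k) (hvc : ∀ j, (v j).IsHomogeneous (c 0))
    (hv : ∀ w, v ≠ (M 0).mulVec w) (hs : ∀ i : Fin n, ∃ w, (X i : MvPolynomial (Fin n) k) • v = (M 0).mulVec w) :
    c n = 0 := by
  have hMM : ∀ i v, (M i).mulVec ((M (i + 1)).mulVec v) = 0 := fun i v => (hex i _).2 ⟨v, rfl⟩
  have hE : ∀ r, r ≤ n → ∀ i, r ≤ i → ∀ v, (M i).mulVec v ∈ VJ (JJ k n r) (b i) →
      ∃ w, v - (M (i + 1)).mulVec w ∈ VJ (JJ k n r) (b (i + 1)) := by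
    intro r
    induction r with
    | zero =>
      intro _ i _ v hv
      rw [JJ_zero, mem_VJ] at hv
      obtain ⟨w, hw⟩ := (hex i v).1 (funext fun j => by simpa using hv j)
      exact ⟨w, by rw [hw, sub_self]; exact Submodule.zero_mem _⟩
    | succ r ih =>
      intro hr i hi v hv
      obtain ⟨i, rfl⟩ : ∃ i', i = i' + 1 := ⟨i - 1, by omega⟩
      rw [JJ_succ k n r hr] at *
      exact exact_step (JJ_reg k n r hr) M hMM i (ih (by omega) i (by omega))
        (ih (by omega) (i + 1) (by omega)) v hv
  have hS : ∀ r, r ≤ n → ∃ v : Fin (b r) → MvPolynomial (Fin n) k,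
      (∀ j, (v j).IsHomogeneous (c r)) ∧ (∀ w, v - (M r).mulVec w ∉ VJ (JJ k n r) (b r)) ∧
      ∀ i : Fin n, ∃ w, (X i : MvPolynomial (Fin n) k) • v - (M r).mulVec w ∈ VJ (JJ k n r) (b r) := by
    intro r
    induction r with
    | zero =>
      intro _
      refine ⟨v, hvc, ?_, ?_⟩
      · intro w hw
        rw [JJ_zero, mem_VJ] at hw
        exact hv w (sub_eq_zero.1 (funext fun j => by simpa using hw j))
      · intro i
        obtain ⟨w, hw⟩ := hs i
        exact ⟨w, by rw [hw, sub_self]; exact Submodule.zero_mem _⟩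
    | succ r ih =>
      intro hr
      obtain ⟨v, h1, h2, h3⟩ := ih (by omega)
      obtain ⟨u, hu⟩ := h3 ⟨r, hr⟩
      have hu' : (X ⟨r, hr⟩ : MvPolynomial (Fin n) k) • v - (M r).mulVec (fun j => homogeneousComponent (c (r + 1)) (u j))
          ∈ VJ (JJ k n r) (b r) := by
        rw [mem_VJ] at *
        intro j
        have := JJ_comp k n r (1 + c r) _ (hu j)
        convert this using 1
        simp only [Pi.sub_apply, Pi.smul_apply, smul_eq_mul, map_sub]
        rw [comp_mul (isHomogeneous_X k _), homogeneousComponent_eq_self (h1 j)]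
        congr 1
        simp only [Matrix.mulVec, dotProduct, map_sum]
        refine Finset.sum_congr rfl fun l _ => ?_
        rw [← hac, comp_mul (hM r j l)]
      have := socle_step (JJ_reg k n r hr) M hMM r (hE r (by omega) r le_rfl) v h2 _ hu'
      rw [← JJ_succ] at this
      exact ⟨_, fun j => homogeneousComponent_isHomogeneous _ _, this.1,
        fun i => this.2 _ (h3 i)⟩
  obtain ⟨v, h1, h2, -⟩ := hS n le_rfl
  have h4 := h2 0
  rw [Matrix.mulVec_zero, sub_zero, mem_VJ, JJ_top] at h4
  push Not at h4
  obtain ⟨j, hj⟩ := h4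
  by_contra hc
  apply hj
  have := (mem_pow_idealOfVars_iff 1 (v j)).2 (fun m hm => by
    rw [hdeg (h1 j) hm]
    omega)
  simpa using this

theorem linear_socle {k : Type*} [Field k] {n : ℕ} (hn : 0 < n)
    {I : Ideal (MvPolynomial (Fin n) k)} {d : ℕ}
    (h : HasLinearResolution k I d) {e : ℕ} {f : MvPolynomial (Fin n) k}
    (hf : f.IsHomogeneous e) (hfI : f ∉ I) (hde : d ≤ e + 1) (hX : ∀ i, X i * f ∈ I) :
    e + 1 = d := by
  obtain ⟨b, g, M, hg, hgI, hM, h0, h1⟩ := h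
  let b' : ℕ → ℕ := fun i => Nat.casesOn i 1 b
  let M' : ∀ i : ℕ, Matrix (Fin (b' i)) (Fin (b' (i + 1))) (MvPolynomial (Fin n) k) :=
    fun i => Nat.casesOn i (fun _ j => g j) M
  let a : ℕ → ℕ := fun i => Nat.casesOn i d (fun _ => 1)
  let c : ℕ → ℕ := fun i => Nat.casesOn i e (fun _ => e + 1 - d)
  have hI : ∀ p, p ∈ I ↔ ∃ w : Fin (b 0) → _, (fun _ => p) = (M' 0).mulVec w := by
    intro p
    rw [← hgI, Ideal.mem_span_range_iff_exists_fun]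
    refine exists_congr fun w => ?_
    constructor
    · intro h
      funext j
      rw [← h]
      simp only [Matrix.mulVec, dotProduct, M']
      exact Finset.sum_congr rfl fun _ _ => mul_comm _ _
    · intro h
      have := congrFun h (0 : Fin 1)
      rw [this]
      simp only [Matrix.mulVec, dotProduct, M']
      exact Finset.sum_congr rfl fun _ _ => mul_comm _ _
  have key := socle_main M' a c
    (by
      rintro (_ | i) j l
      · exact hg l
      · exact hM i j l)
    (by
      rintro (_ | i)
      · simp [a, c]; omega
      · simp [a, c])
    (by
      rintro (_ | i) v
      · refine Iff.trans ?_ (h0 v)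
        constructor
        · intro h
          have := congrFun h (0 : Fin 1)
          rw [← show _ = (0 : MvPolynomial (Fin n) k) from this]
          simp only [Matrix.mulVec, dotProduct, M']
          exact Finset.sum_congr rfl fun _ _ => mul_comm _ _
        · intro h
          funext j
          refine Eq.trans ?_ h
          simp only [Matrix.mulVec, dotProduct, M']
          exact Finset.sum_congr rfl fun _ _ => mul_comm _ _
      · exact h1 i v)
    (fun _ => f) (fun _ => hf)
    (fun w hw => hfI ((hI f).2 ⟨w, hw⟩))
    (fun i => (hI _).1 (hX i))
  obtain ⟨m, rfl⟩ : ∃ m, n = m + 1 := ⟨n - 1, by omega⟩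
  have : e + 1 - d = 0 := key
  omega

theorem colon_span_mem {k σ : Type*} [Field k] {I : Ideal (MvPolynomial σ k)}
    {f r : MvPolynomial σ k} : r ∈ I.colon (Ideal.span {f}) ↔ r * f ∈ I := by
  rw [Ideal.mem_colon_span_singleton]

theorem quot_smul_zero {k σ : Type*} [Field k] {I : Ideal (MvPolynomial σ k)}
    {f r : MvPolynomial σ k} : r • (Ideal.Quotient.mk I f) = 0 ↔ r * f ∈ I := by
  change Ideal.Quotient.mk I (r * f) = 0 ↔ _
  exact Ideal.Quotient.eq_zero_iff_mem

theorem colon_mem_ass {k σ : Type*} [Field k] {I : Ideal (MvPolynomial σ k)}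
    {f : MvPolynomial σ k} (hp : (I.colon (Ideal.span {f})).IsPrime) :
    I.colon (Ideal.span {f}) ∈ assPrimes k I := by
  refine ⟨hp, Ideal.Quotient.mk I f, ?_⟩
  rw [← hp.radical]
  congr 1
  ext r
  rw [colon_span_mem, Submodule.mem_colon_singleton, Submodule.mem_bot, quot_smul_zero]

theorem ass_exists {k : Type*} [Field k] {n : ℕ} {I p : Ideal (MvPolynomial (Fin n) k)}
    (h : p ∈ assPrimes k I) : ∃ f, ∀ r, r ∈ p ↔ r * f ∈ I := by
  obtain ⟨-, x, hx⟩ := isAssociatedPrime_iff.1 h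
  obtain ⟨f, rfl⟩ := Ideal.Quotient.mk_surjective x
  refine ⟨f, fun r => ?_⟩
  rw [hx, Submodule.mem_colon_singleton, Submodule.mem_bot, quot_smul_zero]

theorem homog_mem_pow {k σ : Type*} [Field k] {f : MvPolynomial σ k} {e d : ℕ}
    (hf : f.IsHomogeneous e) (h : d ≤ e) : f ∈ idealOfVars σ k ^ d := by
  rw [mem_pow_idealOfVars_iff]
  intro m hm
  rwa [hdeg hf hm]

theorem le_of_mem_pow {k σ : Type*} [Field k] {f : MvPolynomial σ k} {e d : ℕ}
    (hf : f.IsHomogeneous e) (h0 : f ≠ 0) (h : f ∈ idealOfVars σ k ^ d) : d ≤ e := by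
  rw [mem_pow_idealOfVars_iff] at h
  obtain ⟨m, hm⟩ := support_nonempty.2 h0
  have := hdeg hf hm
  have := h m hm
  omega

theorem prime_has_X {k σ : Type*} [Field k] {p : Ideal (MvPolynomial σ k)} (hp : p.IsPrime)
    (m : σ →₀ ℕ) (h : monomial m (1 : k) ∈ p) : ∃ i, X i ∈ p := by
  rw [monomial_eq, C_1, one_mul, Finsupp.prod] at h
  obtain ⟨i, -, hi⟩ := hp.prod_mem_iff.1 h
  exact ⟨i, hp.mem_of_pow_mem _ hi⟩

theorem vars_maximal {k σ : Type*} [Field k] {p : Ideal (MvPolynomial σ k)}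
    (h : idealOfVars σ k ≤ p) (hp : p ≠ ⊤) : p = idealOfVars σ k := by
  refine le_antisymm ?_ h
  intro f hf
  by_cases hc : coeff 0 f = 0
  · rw [← pow_one (idealOfVars σ k), mem_pow_idealOfVars_iff']
    intro m hm
    have : m = 0 := by
      rw [← Finsupp.degree_eq_zero_iff]; omega
    rwa [this]
  · exfalso
    apply hp
    have h1 : f - C (coeff 0 f) ∈ idealOfVars σ k := by
      rw [← pow_one (idealOfVars σ k), mem_pow_idealOfVars_iff']
      intro m hm
      have : m = 0 := by
        rw [← Finsupp.degree_eq_zero_iff]; omega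
      simp [this]
    have h2 : C (coeff 0 f) ∈ p := by
      have := p.sub_mem hf (h h1)
      rwa [sub_sub_cancel] at this
    exact Ideal.eq_top_of_isUnit_mem _ h2 ((isUnit_iff_ne_zero.2 hc).map C)

/-- For a monomial ideal `I` with linear powers and `depth S/I = 0` (equivalently,
`m ∈ Ass(I)`), one has `v(I^k) = α(I)·k - 1` for all `k ≥ 1`. -/
theorem stmt8 {n : ℕ} (I : Ideal (MvPolynomial (Fin n) K))
    (hmon : IsMonomialIdeal K I)
    (hlin : ∀ k : ℕ, 1 ≤ k → ∃ d : ℕ, HasLinearResolution K (I ^ k) d)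
    (hdepth : Ideal.span (Set.range (X : Fin n → MvPolynomial (Fin n) K)) ∈ assPrimes K I) :
    ∀ k : ℕ, 1 ≤ k → vNumber K (I ^ k) = initialDegree K I * k - 1 := by
  intro k hk
  obtain ⟨d, hres⟩ := hlin 1 le_rfl
  rw [pow_one] at hres
  obtain ⟨f, hf⟩ := ass_exists hdepth
  have hmprime := hdepth.1
  have hIm : I ≤ idealOfVars (Fin n) K := fun r hr => (hf r).2 (I.mul_mem_right _ hr)
  by_cases hI : I = ⊥
  · subst hI
    have h1 : initialDegree K (⊥ : Ideal (MvPolynomial (Fin n) K)) = 0 := by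
      have : {d | ∃ f ∈ (⊥ : Ideal (MvPolynomial (Fin n) K)), f ≠ 0 ∧ f.IsHomogeneous d} = ∅ := by
        ext d
        simp
      rw [initialDegree, this, Nat.sInf_empty]
    rw [h1, zero_mul, zero_tsub, Ideal.bot_pow (by omega)]
    refine Nat.le_zero.1 (Nat.sInf_le ⟨1, isHomogeneous_one _ _, colon_mem_ass ?_⟩)
    have : (⊥ : Ideal (MvPolynomial (Fin n) K)).colon
        (Ideal.span {(1 : MvPolynomial (Fin n) K)}) = ⊥ := by
      ext r
      rw [colon_span_mem, mul_one]
    rw [this]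
    exact Ideal.isPrime_bot
  have hn : 0 < n := by
    by_contra h
    obtain rfl : n = 0 := by omega
    apply hI
    rw [eq_bot_iff]
    refine hIm.trans ?_
    rw [idealOfVars, Set.range_eq_empty, Ideal.span_empty]
  -- `I` lives in degrees at least `d`
  obtain ⟨hId, ⟨u, huI, hu0, hud⟩, hhom⟩ : I ≤ idealOfVars (Fin n) K ^ d ∧
      (∃ u ∈ I, u ≠ 0 ∧ u.IsHomogeneous d) ∧
      (∀ c p, p ∈ I → homogeneousComponent c p ∈ I) := by
    obtain ⟨A, hA⟩ := hmon
    obtain ⟨b, g, M, hg, hgI, -⟩ := hres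
    refine ⟨?_, ?_, ?_⟩
    · rw [← hgI, Ideal.span_le]
      rintro _ ⟨j, rfl⟩
      exact homog_mem_pow (hg j) le_rfl
    · by_contra hno
      push Not at hno
      apply hI
      rw [← hgI, Ideal.span_eq_bot]
      rintro _ ⟨j, rfl⟩
      by_contra hj
      exact hno (g j) (hgI ▸ Ideal.subset_span ⟨j, rfl⟩) hj (hg j)
    · intro c p hp
      classical
      rw [hA, mem_ideal_span_monomial_image] at *
      intro m hm
      rw [support_homogeneousComponent] at hm
      exact hp m (Finset.mem_of_mem_filter _ hm)
  have hα : initialDegree K I = d := by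
    refine le_antisymm (Nat.sInf_le ⟨u, huI, hu0, hud⟩) ?_
    refine le_csInf ⟨d, u, huI, hu0, hud⟩ ?_
    rintro e ⟨q, hq, hq0, hqe⟩
    exact le_of_mem_pow hqe hq0 (hId hq)
  have hIk : I ^ k ≤ idealOfVars (Fin n) K ^ (d * k) := by
    rw [pow_mul]
    exact Ideal.pow_right_mono hId k
  -- the homogeneous socle element
  have hfI : f ∉ I := by
    intro h
    apply hmprime.ne_top
    rw [Ideal.eq_top_iff_one, hf, one_mul]
    exact h
  obtain ⟨e, he⟩ : ∃ e, homogeneousComponent e f ∉ I := by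
    by_contra hno
    push Not at hno
    apply hfI
    rw [← sum_homogeneousComponent f]
    exact Ideal.sum_mem _ fun i _ => hno i
  set f' := homogeneousComponent e f with hf'
  have hf'e : f'.IsHomogeneous e := homogeneousComponent_isHomogeneous _ _
  have hf'0 : f' ≠ 0 := fun h => he (h ▸ I.zero_mem)
  have hX : ∀ i, X i * f' ∈ I := by
    intro i
    rw [hf', ← comp_mul (isHomogeneous_X K i)]
    exact hhom _ _ ((hf _).1 (Ideal.subset_span ⟨i, rfl⟩))
  have hXne : ∀ (i : Fin n), (X i : MvPolynomial (Fin n) K) ≠ 0 := fun i => X_ne_zero i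
  have hde : d ≤ e + 1 := by
    have := le_of_mem_pow ((isHomogeneous_X K (⟨0, hn⟩ : Fin n)).mul hf'e)
      (mul_ne_zero (hXne _) hf'0) (hId (hX _))
    omega
  have hed : e + 1 = d := linear_socle hn hres hf'e he hde hX
  rw [hα]
  have hdk : d * k = d * (k - 1) + d := by
    obtain ⟨j, rfl⟩ : ∃ j, k = j + 1 := ⟨k - 1, by omega⟩
    simp [mul_add]
  -- the witness
  have hwit : d * k - 1 ∈ {d | ∃ f : MvPolynomial (Fin n) K, f.IsHomogeneous d ∧
      (I ^ k).colon (Ideal.span {f}) ∈ assPrimes K (I ^ k)} := by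
    have hh : (u ^ (k - 1) * f').IsHomogeneous (d * k - 1) := by
      have := (hud.pow (k - 1)).mul hf'e
      rwa [show d * (k - 1) + e = d * k - 1 by omega] at this
    refine ⟨u ^ (k - 1) * f', hh, colon_mem_ass ?_⟩
    have : (I ^ k).colon (Ideal.span {u ^ (k - 1) * f'}) = idealOfVars (Fin n) K := by
      apply vars_maximal
      · rw [idealOfVars, Ideal.span_le]
        rintro _ ⟨i, rfl⟩
        rw [SetLike.mem_coe, colon_span_mem, mul_left_comm]
        have := Ideal.mul_mem_mul (Ideal.pow_mem_pow huI (k - 1)) (hX i)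
        rwa [← pow_succ, Nat.sub_add_cancel hk] at this
      · rw [Ne, Ideal.eq_top_iff_one, colon_span_mem, one_mul]
        intro h
        have := le_of_mem_pow hh (mul_ne_zero (pow_ne_zero _ hu0) hf'0) (hIk h)
        omega
    rw [this]
    exact hmprime
  refine le_antisymm (Nat.sInf_le hwit) (le_csInf ⟨_, hwit⟩ ?_)
  rintro c ⟨q, hqc, hq⟩
  have hqp := hq.1
  obtain ⟨m, hm⟩ : ∃ m, monomial m (1 : K) ∈ I := by
    obtain ⟨A, hA⟩ := hmon
    by_contra hno
    push Not at hno
    apply hI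
    rw [hA, Ideal.span_eq_bot]
    rintro _ ⟨m, hm, rfl⟩
    exact absurd (hA ▸ Ideal.subset_span ⟨m, hm, rfl⟩) (hno m)
  have hmp : monomial m (1 : K) ∈ (I ^ k).colon (Ideal.span {q}) := by
    apply hqp.mem_of_pow_mem k
    rw [colon_span_mem]
    exact Ideal.mul_mem_right _ _ (Ideal.pow_mem_pow hm k)
  obtain ⟨i, hi⟩ := prime_has_X hqp m hmp
  rw [colon_span_mem] at hi
  have hq0 : q ≠ 0 := by
    rintro rfl
    apply hqp.ne_top
    rw [Ideal.eq_top_iff_one, colon_span_mem, mul_zero]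
    exact Ideal.zero_mem _
  have := le_of_mem_pow ((isHomogeneous_X K i).mul hqc) (mul_ne_zero (hXne _) hq0) (hIk hi)
  omega

end
end
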